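/- arXiv:2209.01934 — 2 statements merged into one kernel-verified Lean document; each statement's English description precedes it below -/
import Mathlib

section
/- Kernel convergence in the weak non-unitarity regime (equation (2.15), case (b)). Under the weak non-unitarity setup with zooming point p = 1, as N → ∞ the rescaled kernel κ̃_N(z,w) converges to e^{−z²−w²} κ_w(z,w) uniformly for (z,w) in compact subsets of ℂ × ℂ. -/
open MeasureTheory Filter Finset

noncomputable section

namespace SI

/-- The kernel `G_N(ζ,η)` built from the skew-orthogonal polynomials of the
symplectic induced spherical ensemble (all powers are principal-branch `cpow`s,
which agree with the integer powers whenever `2L` is a nonnegative integer). -/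
def GK (N : ℕ) (n L : ℝ) (ζ η : ℂ) : ℂ :=
  ((Real.pi : ℂ) * Complex.Gamma ((2*n+2*L+2 : ℝ) : ℂ) / (2:ℂ) ^ ((2*n+2*L+1 : ℝ) : ℂ)) *
  ∑ k ∈ range N, ∑ l ∈ range (k+1),
    ζ ^ ((2*k+2*L+1 : ℝ) : ℂ) * η ^ ((2*l+2*L : ℝ) : ℂ) /
      (Complex.Gamma ((k+L+3/2 : ℝ) : ℂ) * Complex.Gamma ((n-k : ℝ) : ℂ) *
       Complex.Gamma ((n-l+1/2 : ℝ) : ℂ) * Complex.Gamma ((l+L+1 : ℝ) : ℂ))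

/-- The skew-symmetric kernel `κ̂_N(ζ,η) = G_N(ζ,η) - G_N(η,ζ)`. -/
def KK (N : ℕ) (n L : ℝ) (ζ η : ℂ) : ℂ := GK N n L ζ η - GK N n L η ζ

/-- The density value `δ = ((n+L)/N)(1+p²)⁻²`. -/
def dlt (N : ℕ) (n L p : ℝ) : ℝ := ((n+L)/N) * (1+p^2)^(-2 : ℝ)

/-- `√(Nδ)`. -/
def sc (N : ℕ) (n L p : ℝ) : ℝ := Real.sqrt (N * dlt N n L p)

/-- The rescaled kernel `κ̃_N(z,w)`. -/
def resc (N : ℕ) (n L p : ℝ) (z w : ℂ) : ℂ :=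
  (((1+p^2) ^ (-3 : ℝ) : ℝ) : ℂ) * (((N * dlt N n L p) ^ (-(3/2) : ℝ) : ℝ) : ℂ) *
  ((1 + ((p:ℂ) + z / (sc N n L p : ℂ))^2) * (1 + ((p:ℂ) + w / (sc N n L p : ℂ))^2))
      ^ ((-(n+L-1/2) : ℝ) : ℂ) *
  KK N n L ((p:ℂ) + z / (sc N n L p : ℂ)) ((p:ℂ) + w / (sc N n L p : ℂ))

/-- The entire extension of the error function: `erf(z) = (2/√π)∫₀¹ z e^{-s²z²} ds`. -/
def cerf (z : ℂ) : ℂ :=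
  (2 / (Real.sqrt Real.pi : ℂ)) * ∫ s in (0:ℝ)..1, z * Complex.exp (-((s:ℂ)^2 * z^2))

/-- `erfc(z) = 1 - erf(z)`. -/
def cerfc (z : ℂ) : ℂ := 1 - cerf z

/-- `f_z(u) = (1/2) erfc(√2 (z-u))`. -/
def fz (z : ℂ) (u : ℝ) : ℂ := (1/2) * cerfc ((Real.sqrt 2 : ℂ) * (z - (u:ℂ)))

/-- The Wronskian `W(f_w, f_z)(u) = f_w(u) f_z'(u) - f_z(u) f_w'(u)` (derivative in `u`). -/
def Wr (w z : ℂ) (u : ℝ) : ℂ := fz w u * deriv (fz z) u - fz z u * deriv (fz w) u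

/-- The interpolating kernel `κ_w` of the weak non-unitarity regime,
with `α = ρ/(2√2)`. -/
def kweak (ρ : ℝ) (z w : ℂ) : ℂ :=
  (Real.sqrt Real.pi : ℂ) * Complex.exp (z^2+w^2) *
    ((∫ u in (-(ρ/(2*Real.sqrt 2)))..(ρ/(2*Real.sqrt 2)), Wr w z u)
      + fz w (ρ/(2*Real.sqrt 2)) * fz z (-(ρ/(2*Real.sqrt 2)))
      - fz z (ρ/(2*Real.sqrt 2)) * fz w (-(ρ/(2*Real.sqrt 2))))

/-- The admissible system sizes in the weak non-unitarity regime: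
`N ≥ ρ²` for which `n = N²/ρ²` is an integer. -/
def Sweak (ρ : ℝ) : Set ℕ :=
  {N | ρ^2 ≤ (N : ℝ) ∧ ∃ nm : ℕ, (nm : ℝ) = (N:ℝ)^2/ρ^2}

/-!
At `p = 1` write `ζ = 1 + h` and `η = 1 + k`, where `h` and `k` are of order `1 / √n`, and let
`c = n + L - 1 / 2`. The factor `((1 + ζ²) (1 + η²)) ^ (-c)` makes every term of `G_N` a product of
two factors, one in `(ζ, i)` and one in `(η, j)`, each of which is a symmetric binomial weight
`2⁻ᶜ (c choose c/2 + x)` at a lattice point `x`, tilted by an exponential in `x` and `h` (or `k`).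
Here `x` runs over `N` consecutive lattice points around `0`, while the binomial law has standard
deviation `√c / 2`, of the same order as `N`. By the local de Moivre–Laplace theorem the tilted
weights converge to Gaussian densities centred at `z` and `w`, so the sum over `j ≤ i` is a Riemann
sum of the integral of their product over the triangle `-α ≤ v ≤ u ≤ α`. The function `f_z` is a
primitive of the Gaussian density, and antisymmetrising the integral gives the Wronskian form of
`κ_w`. Since every estimate allows `z` and `w` to move along with the filter, locally uniform
convergence follows from convergence along the product filter `l ×ˢ 𝓝 q`.
-/

open scoped Real Topology

section LogGamma

/-- The function `log Γ` on the real line; only its values on `(0, ∞)` are meaningful. -/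
def logGamma (x : ℝ) : ℝ := Real.log (Real.Gamma x)

lemma convexOn_logGamma : ConvexOn ℝ (Set.Ioi 0) logGamma := Real.convexOn_log_Gamma

lemma exp_logGamma {x : ℝ} (hx : 0 < x) : Real.exp (logGamma x) = Real.Gamma x :=
  Real.exp_log (Real.Gamma_pos_of_pos hx)

lemma logGamma_add_one {x : ℝ} (hx : 0 < x) : logGamma (x + 1) = Real.log x + logGamma x := by
  rw [logGamma, Real.Gamma_add_one hx.ne', Real.log_mul hx.ne' (Real.Gamma_pos_of_pos hx).ne',
    logGamma]

lemma differentiableAt_logGamma {x : ℝ} (hx : 0 < x) : DifferentiableAt ℝ logGamma x :=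
  (Real.differentiableAt_Gamma fun m => by
    have : (0 : ℝ) ≤ m := m.cast_nonneg
    linarith).log (Real.Gamma_pos_of_pos hx).ne'

lemma slope_logGamma_add_one {x : ℝ} (hx : 0 < x) : slope logGamma x (x + 1) = Real.log x := by
  rw [slope_def_field, logGamma_add_one hx]
  ring

lemma deriv_logGamma_le_log {x : ℝ} (hx : 0 < x) : deriv logGamma x ≤ Real.log x := by
  rw [← slope_logGamma_add_one hx]
  exact convexOn_logGamma.deriv_le_slope hx (hx.trans (lt_add_one x)) (lt_add_one x)
    (differentiableAt_logGamma hx)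

lemma log_sub_one_le_deriv_logGamma {x : ℝ} (hx : 1 < x) :
    Real.log (x - 1) ≤ deriv logGamma x := by
  have hx' : 0 < x - 1 := sub_pos.2 hx
  have hslope := slope_logGamma_add_one hx'
  rw [sub_add_cancel] at hslope
  rw [← hslope]
  exact convexOn_logGamma.slope_le_deriv hx' (zero_lt_one.trans hx) (sub_one_lt x)
    (differentiableAt_logGamma (zero_lt_one.trans hx))

/-- The symmetric second difference of `log Γ` at `a` with step `x`. -/
def logGammaDiff (a x : ℝ) : ℝ := logGamma (a + x) + logGamma (a - x) - 2 * logGamma a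

lemma logGammaDiff_neg (a x : ℝ) : logGammaDiff a (-x) = logGammaDiff a x := by
  unfold logGammaDiff
  ring_nf

lemma logGammaDiff_abs (a x : ℝ) : logGammaDiff a |x| = logGammaDiff a x := by
  rcases abs_choice x with h | h <;> simp only [h, logGammaDiff_neg]

lemma Gamma_add_mul_Gamma_sub {a x : ℝ} (hx : |x| < a) :
    Real.Gamma (a + x) * Real.Gamma (a - x) =
      Real.Gamma a ^ 2 * Real.exp (logGammaDiff a x) := by
  obtain ⟨hx₁, hx₂⟩ := abs_lt.1 hx
  rw [← exp_logGamma (by linarith : 0 < a + x), ← exp_logGamma (by linarith : 0 < a - x),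
    ← exp_logGamma (by linarith : 0 < a), logGammaDiff, ← Real.exp_add, ← Real.exp_nat_mul,
    ← Real.exp_add]
  congr 1
  push_cast
  ring

lemma logGammaDiff_nonneg {a x : ℝ} (hx : |x| < a) : 0 ≤ logGammaDiff a x := by
  obtain ⟨hx₁, hx₂⟩ := abs_lt.1 hx
  have hadd : a + x ∈ Set.Ioi 0 := Set.mem_Ioi.2 (by linarith)
  have hsub : a - x ∈ Set.Ioi 0 := Set.mem_Ioi.2 (by linarith)
  have hconv := convexOn_logGamma.2 hadd hsub (by norm_num : (0 : ℝ) ≤ 1 / 2)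
    (by norm_num : (0 : ℝ) ≤ 1 / 2) (by norm_num)
  have hmid : (1 / 2 : ℝ) • (a + x) + (1 / 2 : ℝ) • (a - x) = a := by
    simp only [smul_eq_mul]
    ring
  rw [hmid, smul_eq_mul, smul_eq_mul] at hconv
  unfold logGammaDiff
  linarith

lemma hasDerivAt_logGammaDiff {a x : ℝ} (hx : |x| < a) :
    HasDerivAt (logGammaDiff a) (deriv logGamma (a + x) - deriv logGamma (a - x)) x := by
  obtain ⟨hx₁, hx₂⟩ := abs_lt.1 hx
  have hadd := (differentiableAt_logGamma (by linarith : 0 < a + x)).hasDerivAt.comp_const_add a x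
  have hsub := (differentiableAt_logGamma (by linarith : 0 < a - x)).hasDerivAt.comp_const_sub a x
  exact ((hadd.fun_add hsub).sub_const (2 * logGamma a)).congr_deriv (sub_eq_add_neg _ _).symm

lemma logGammaDiff_zero (a : ℝ) : logGammaDiff a 0 = 0 := by
  unfold logGammaDiff
  ring_nf

lemma logGammaDiff_le {a x : ℝ} (hx : 0 ≤ x) (hxa : x + 1 < a) :
    logGammaDiff a x ≤ (x ^ 2 + x) / (a - x - 1) := by
  have hderiv {t : ℝ} (ht : t ∈ Set.Icc 0 x) := hasDerivAt_logGammaDiff (a := a) (x := t)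
    (by rw [abs_of_nonneg ht.1]; linarith [ht.2])
  refine image_le_of_deriv_right_le_deriv_boundary (f := logGammaDiff a)
    (B := fun t => (t ^ 2 + t) / (a - x - 1)) (B' := fun t => (2 * t + 1) / (a - x - 1))
    (fun t ht => (hderiv ht).continuousAt.continuousWithinAt)
    (fun t ht => (hderiv (Set.Ico_subset_Icc_self ht)).hasDerivWithinAt)
    (by simp [logGammaDiff_zero]) (by fun_prop)
    (fun t _ => HasDerivAt.hasDerivWithinAt ?_) ?_ (Set.right_mem_Icc.2 hx)
  · simpa using (((hasDerivAt_id t).pow 2).add (hasDerivAt_id t)).div_const (a - x - 1)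
  · rintro t ⟨ht, htx⟩
    have hden : 0 < a - t - 1 := by linarith
    calc deriv logGamma (a + t) - deriv logGamma (a - t)
        ≤ Real.log (a + t) - Real.log (a - t - 1) :=
          sub_le_sub (deriv_logGamma_le_log (by linarith))
            (log_sub_one_le_deriv_logGamma (by linarith))
      _ = Real.log ((a + t) / (a - t - 1)) := (Real.log_div (by linarith) hden.ne').symm
      _ ≤ (a + t) / (a - t - 1) - 1 := Real.log_le_sub_one_of_pos (div_pos (by linarith) hden)
      _ = (2 * t + 1) / (a - t - 1) := by field_simp; ring
      _ ≤ (2 * t + 1) / (a - x - 1) := by gcongr; linarith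

lemma le_logGammaDiff {a x : ℝ} (hx : 0 ≤ x) (hxa : x + 1 < a) :
    x ^ 2 / (a + x) - x / (a - 1) ≤ logGammaDiff a x := by
  have hderiv {t : ℝ} (ht : t ∈ Set.Icc 0 x) := hasDerivAt_logGammaDiff (a := a) (x := t)
    (by rw [abs_of_nonneg ht.1]; linarith [ht.2])
  have hbound := image_le_of_deriv_right_le_deriv_boundary (f := fun t => -logGammaDiff a t)
    (B := fun t => t / (a - 1) - t ^ 2 / (a + x)) (B' := fun t => 1 / (a - 1) - 2 * t / (a + x))
    (fun t ht => (hderiv ht).neg.continuousAt.continuousWithinAt)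
    (fun t ht => (hderiv (Set.Ico_subset_Icc_self ht)).neg.hasDerivWithinAt)
    (by simp [logGammaDiff_zero]) (by fun_prop)
    (fun t _ => HasDerivAt.hasDerivWithinAt ?_) ?_ (Set.right_mem_Icc.2 hx)
  · linarith
  · simpa using ((hasDerivAt_id t).div_const (a - 1)).fun_sub
      (((hasDerivAt_id t).pow 2).div_const (a + x))
  · rintro t ⟨ht, htx⟩
    have hnum : 0 < a + t - 1 := by linarith
    have hden : 0 < a - t := by linarith
    calc -(deriv logGamma (a + t) - deriv logGamma (a - t))
        ≤ Real.log (a - t) - Real.log (a + t - 1) := by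
          linarith [deriv_logGamma_le_log hden,
            log_sub_one_le_deriv_logGamma (x := a + t) (by linarith)]
      _ = Real.log ((a - t) / (a + t - 1)) := (Real.log_div hden.ne' hnum.ne').symm
      _ ≤ (a - t) / (a + t - 1) - 1 := Real.log_le_sub_one_of_pos (div_pos hden hnum)
      _ = 1 / (a + t - 1) - 2 * t / (a + t - 1) := by field_simp; ring
      _ ≤ 1 / (a - 1) - 2 * t / (a + x) := by gcongr <;> linarith

variable {ι : Type*} {l : Filter ι} {a x : ι → ℝ} {v : ℝ}

lemma tendsto_abs_div_of_div_sqrt (ha : Tendsto a l atTop)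
    (hx : Tendsto (fun i => x i / √(a i)) l (𝓝 v)) : Tendsto (fun i => |x i| / a i) l (𝓝 0) := by
  have := hx.abs.mul ((Real.tendsto_sqrt_atTop.comp ha).const_div_atTop 1)
  rw [mul_zero] at this
  refine this.congr' ((ha.eventually_gt_atTop 0).mono fun i hi => ?_)
  rw [Function.comp_apply, abs_div, abs_of_nonneg (Real.sqrt_nonneg _), div_mul_div_comm,
    Real.mul_self_sqrt hi.le, mul_one]

lemma eventually_abs_add_one_lt (ha : Tendsto a l atTop)
    (hx : Tendsto (fun i => x i / √(a i)) l (𝓝 v)) : ∀ᶠ i in l, |x i| + 1 < a i := by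
  have hsum := (tendsto_abs_div_of_div_sqrt ha hx).add (ha.const_div_atTop 1)
  rw [add_zero] at hsum
  filter_upwards [hsum.eventually_lt_const one_pos, ha.eventually_gt_atTop 0] with i hi hai
  rwa [← add_div, div_lt_one hai] at hi

lemma tendsto_logGammaDiff (ha : Tendsto a l atTop)
    (hx : Tendsto (fun i => x i / √(a i)) l (𝓝 v)) :
    Tendsto (fun i => logGammaDiff (a i) (x i)) l (𝓝 (v ^ 2)) := by
  have hpos : ∀ᶠ i in l, 0 < a i := ha.eventually_gt_atTop 0
  have hinv : Tendsto (fun i => 1 / a i) l (𝓝 0) := ha.const_div_atTop 1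
  have hlin := tendsto_abs_div_of_div_sqrt ha hx
  have hsq : Tendsto (fun i => |x i| ^ 2 / a i) l (𝓝 (v ^ 2)) := by
    refine (hx.pow 2).congr' (hpos.mono fun i hi => ?_)
    rw [div_pow, Real.sq_sqrt hi.le, ← sq_abs]
  have hlower : Tendsto (fun i => |x i| ^ 2 / a i / (1 + |x i| / a i) -
      |x i| / a i / (1 - 1 / a i)) l (𝓝 (v ^ 2)) := by
    simpa using (hsq.div (hlin.const_add 1) (by simp)).sub
      (hlin.div (hinv.const_sub 1) (by simp))
  have hupper : Tendsto (fun i => (|x i| ^ 2 / a i + |x i| / a i) /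
      (1 - |x i| / a i - 1 / a i)) l (𝓝 (v ^ 2)) := by
    simpa [Pi.div_def] using (hsq.add hlin).div ((hlin.const_sub 1).sub hinv) (by simp)
  refine tendsto_of_tendsto_of_tendsto_of_le_of_le' hlower hupper ?_ ?_ <;>
    filter_upwards [hpos, eventually_abs_add_one_lt ha hx] with i hai hi <;>
    rw [← logGammaDiff_abs]
  · refine le_of_eq_of_le ?_ (le_logGammaDiff (abs_nonneg (x i)) hi)
    have : a i - 1 ≠ 0 := by linarith [abs_nonneg (x i)]
    field_simp
  · refine (logGammaDiff_le (abs_nonneg (x i)) hi).trans_eq ?_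
    have : a i - |x i| - 1 ≠ 0 := by linarith
    field_simp

end LogGamma

section BinomialWeight

lemma Gamma_add_half_div {s : ℝ} (hs : 0 < s) :
    Real.Gamma (s + 1 / 2) / (Real.Gamma s * √s) =
      Real.exp (-(logGammaDiff (s + 1 / 2) (1 / 2) / 2)) := by
  have hhalf : |(1 / 2 : ℝ)| < s + 1 / 2 := by
    rw [abs_of_pos one_half_pos]
    linarith
  have hdiff := Gamma_add_mul_Gamma_sub hhalf
  rw [show s + 1 / 2 + 1 / 2 = s + 1 by ring, add_sub_cancel_right,
    Real.Gamma_add_one hs.ne'] at hdiff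
  have := Real.Gamma_pos_of_pos hs
  have := Real.Gamma_pos_of_pos (by linarith : 0 < s + 1 / 2)
  rw [← sq_eq_sq₀ (by positivity) (Real.exp_pos _).le, ← Real.exp_nat_mul, div_pow, mul_pow,
    Real.sq_sqrt hs.le, div_eq_iff (by positivity)]
  rw [show Real.Gamma s ^ 2 * s = s * Real.Gamma s * Real.Gamma s by ring, hdiff, mul_left_comm,
    ← Real.exp_add]
  push_cast
  ring_nf
  simp

lemma tendsto_add_const_div_self (b : ℝ) : Tendsto (fun c : ℝ => (c + b) / c) atTop (𝓝 1) := by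
  have h := ((tendsto_id (x := atTop)).const_div_atTop b).const_add (1 : ℝ)
  rw [add_zero] at h
  refine h.congr' ?_
  filter_upwards [eventually_ne_atTop 0] with c hc
  rw [id, add_div, div_self hc]

lemma tendsto_Gamma_add_half_div :
    Tendsto (fun s => Real.Gamma (s + 1 / 2) / (Real.Gamma s * √s)) atTop (𝓝 1) := by
  have ha : Tendsto (fun s : ℝ => s + 1 / 2) atTop atTop :=
    tendsto_atTop_add_const_right _ _ tendsto_id
  have hφ := tendsto_logGammaDiff ha ((Real.tendsto_sqrt_atTop.comp ha).const_div_atTop (1 / 2))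
  have hlim := (hφ.div_const 2).neg.rexp
  rw [zero_pow two_ne_zero, zero_div, neg_zero, Real.exp_zero] at hlim
  refine hlim.congr' ?_
  filter_upwards [eventually_gt_atTop 0] with s hs using (Gamma_add_half_div hs).symm

/-- The symmetric binomial weight `2⁻ᶜ (c choose c/2 + x)`, for a real number `c` of trials and
a real deviation `x` from the mean. -/
def binomWeight (c x : ℝ) : ℝ :=
  Real.Gamma (c + 1) / (2 ^ c * (Real.Gamma (c / 2 + 1 + x) * Real.Gamma (c / 2 + 1 - x)))

lemma binomWeight_eq {c x : ℝ} (hx : |x| < c / 2 + 1) :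
    binomWeight c x = binomWeight c 0 * Real.exp (-logGammaDiff (c / 2 + 1) x) := by
  have hΓ := Gamma_add_mul_Gamma_sub hx
  rw [binomWeight, binomWeight, hΓ, add_zero, sub_zero, Real.exp_neg]
  field_simp

lemma binomWeight_zero {c : ℝ} (hc : 0 < c) :
    binomWeight c 0 = Real.Gamma ((c + 1) / 2) / (Real.Gamma ((c + 1) / 2 + 1 / 2) * √π) := by
  have hdup := Real.Gamma_mul_Gamma_add_half ((c + 1) / 2)
  rw [mul_div_cancel₀ _ two_ne_zero, show 1 - (c + 1) = -c by ring, Real.rpow_neg zero_le_two]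
    at hdup
  have := Real.Gamma_pos_of_pos (by linarith : 0 < (c + 1) / 2 + 1 / 2)
  rw [binomWeight, add_zero, sub_zero, show c / 2 + 1 = (c + 1) / 2 + 1 / 2 by ring]
  field_simp at hdup ⊢
  linarith

lemma tendsto_sqrt_mul_binomWeight_zero :
    Tendsto (fun c => √c * binomWeight c 0) atTop (𝓝 √(2 / π)) := by
  have hs : Tendsto (fun c : ℝ => (c + 1) / 2) atTop atTop :=
    (tendsto_atTop_add_const_right _ _ tendsto_id).atTop_div_const two_pos
  have hratio : Tendsto (fun c : ℝ => c / ((c + 1) / 2)) atTop (𝓝 2) := by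
    have h := ((tendsto_add_const_div_self 1).inv₀ one_ne_zero).const_mul 2
    rw [inv_one, mul_one] at h
    exact h.congr fun c => by rw [inv_div, div_div_eq_mul_div, mul_comm c, mul_div_assoc]
  have hlim := ((hratio.div_const π).sqrt).mul
    ((tendsto_Gamma_add_half_div.comp hs).inv₀ one_ne_zero)
  rw [inv_one, mul_one] at hlim
  refine hlim.congr' ?_
  filter_upwards [eventually_gt_atTop 0] with c hc
  rw [binomWeight_zero hc, Real.sqrt_div' _ Real.pi_pos.le, Real.sqrt_div' _ (by positivity)]
  have : √((c + 1) / 2) ≠ 0 := by positivity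
  have := Real.Gamma_pos_of_pos (by linarith : 0 < (c + 1) / 2)
  rw [Function.comp_apply]
  field_simp

variable {ι : Type*} {l : Filter ι} {c x : ι → ℝ} {u : ℝ}

lemma tendsto_div_sqrt_half_add_one (hc : Tendsto c l atTop)
    (hx : Tendsto (fun i => x i / √(c i)) l (𝓝 u)) :
    Tendsto (fun i => x i / √(c i / 2 + 1)) l (𝓝 (√2 * u)) := by
  have hratio : Tendsto (fun i => √(2 * ((c i + 2) / c i)⁻¹)) l (𝓝 √2) := by
    simpa using ((((tendsto_add_const_div_self 2).comp hc).inv₀ one_ne_zero).const_mul 2).sqrt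
  refine (hratio.mul hx).congr' ?_
  filter_upwards [hc.eventually_gt_atTop 0] with i hi
  have hsqrt : √(2 * ((c i + 2) / c i)⁻¹) = √(c i) / √(c i / 2 + 1) := by
    rw [← Real.sqrt_div hi.le]
    congr 1
    field_simp
  have : √(c i) ≠ 0 := by positivity
  rw [hsqrt]
  field_simp

/-- The local de Moivre–Laplace theorem. -/
lemma tendsto_sqrt_mul_binomWeight (hc : Tendsto c l atTop)
    (hx : Tendsto (fun i => x i / √(c i)) l (𝓝 u)) :
    Tendsto (fun i => √(c i) * binomWeight (c i) (x i)) l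
      (𝓝 (√(2 / π) * Real.exp (-2 * u ^ 2))) := by
  have ha : Tendsto (fun i => c i / 2 + 1) l atTop :=
    tendsto_atTop_add_const_right _ _ (hc.atTop_div_const two_pos)
  have hxa := tendsto_div_sqrt_half_add_one hc hx
  have hlim := (tendsto_sqrt_mul_binomWeight_zero.comp hc).mul
    (tendsto_logGammaDiff ha hxa).neg.rexp
  rw [mul_pow, Real.sq_sqrt zero_le_two, ← neg_mul] at hlim
  refine hlim.congr' ((eventually_abs_add_one_lt ha hxa).mono fun i hi => ?_)
  simp only [Function.comp_apply]
  rw [mul_assoc, ← binomWeight_eq (by linarith)]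

lemma binomWeight_nonneg {c x : ℝ} (hc : 0 ≤ c) (hx : |x| < c / 2 + 1) : 0 ≤ binomWeight c x := by
  obtain ⟨hx₁, hx₂⟩ := abs_lt.1 hx
  have hΓ {s : ℝ} (hs : 0 < s) := (Real.Gamma_pos_of_pos hs).le
  exact div_nonneg (hΓ (by linarith)) (mul_nonneg (by positivity)
    (mul_nonneg (hΓ (by linarith)) (hΓ (by linarith))))

lemma binomWeight_le_binomWeight_zero {c x : ℝ} (hc : 0 ≤ c) (hx : |x| < c / 2 + 1) :
    binomWeight c x ≤ binomWeight c 0 := by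
  rw [binomWeight_eq hx]
  refine mul_le_of_le_one_right (binomWeight_nonneg hc ?_) (Real.exp_le_one_iff.2 ?_)
  · rw [abs_zero]
    linarith
  · exact neg_nonpos.2 (logGammaDiff_nonneg hx)

lemma eventually_abs_sqrt_mul_binomWeight_le_one :
    ∀ᶠ c in atTop, ∀ x, |x| < c / 2 + 1 → |√c * binomWeight c x| ≤ 1 := by
  have hlt : √(2 / π) < 1 := by
    rw [Real.sqrt_lt' one_pos, one_pow, div_lt_one Real.pi_pos]
    linarith [Real.pi_gt_three]
  filter_upwards [tendsto_sqrt_mul_binomWeight_zero.eventually_lt_const hlt,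
    eventually_ge_atTop 0] with c hlt hc x hx
  rw [abs_of_nonneg (mul_nonneg (Real.sqrt_nonneg c) (binomWeight_nonneg hc hx))]
  exact (mul_le_mul_of_nonneg_left (binomWeight_le_binomWeight_zero hc hx)
    (Real.sqrt_nonneg c)).trans hlt.le

end BinomialWeight

section Tilt

/-- The ratio `((1 + h) ^ 2) ^ x / (1 + h ^ 2 / (2 * (1 + h))) ^ c` on the branch where it is `1`
for `h = 0`: the factor by which the evaluation point `1 + h` tilts `binomWeight c x`. -/
def tilt (c x : ℝ) (h : ℂ) : ℂ :=
  Complex.exp (2 * x * Complex.log (1 + h) - c * Complex.log (1 + h ^ 2 / (2 * (1 + h))))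

lemma re_one_add_pos {h : ℂ} (hh : ‖h‖ < 1) : 0 < (1 + h).re := by
  rw [Complex.add_re, Complex.one_re]
  linarith [neg_le_of_abs_le (Complex.abs_re_le_norm h)]

lemma ne_zero_of_re_pos {z : ℂ} (hz : 0 < z.re) : z ≠ 0 := by
  rintro rfl
  exact lt_irrefl _ hz

lemma log_mul_of_re_pos {z w : ℂ} (hz : 0 < z.re) (hw : 0 < w.re) :
    Complex.log (z * w) = Complex.log z + Complex.log w := by
  have hz' := abs_lt.1 (Complex.abs_arg_lt_pi_div_two_iff.2 (Or.inl hz))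
  have hw' := abs_lt.1 (Complex.abs_arg_lt_pi_div_two_iff.2 (Or.inl hw))
  exact Complex.log_mul (ne_zero_of_re_pos hz) (ne_zero_of_re_pos hw)
    ⟨by linarith, by linarith⟩

lemma mul_cpow_of_re_pos {z w : ℂ} (hz : 0 < z.re) (hw : 0 < w.re) (s : ℂ) :
    (z * w) ^ s = z ^ s * w ^ s := by
  have hz' := ne_zero_of_re_pos hz
  have hw' := ne_zero_of_re_pos hw
  rw [Complex.cpow_def_of_ne_zero (mul_ne_zero hz' hw'), Complex.cpow_def_of_ne_zero hz',
    Complex.cpow_def_of_ne_zero hw', log_mul_of_re_pos hz hw, ← Complex.exp_add, add_mul]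

lemma re_one_add_one_add_sq_pos {h : ℂ} (hh : ‖h‖ < 1 / 2) : 0 < (1 + (1 + h) ^ 2).re := by
  have hsq : ‖h + h ^ 2 / 2‖ < 1 := by
    calc ‖h + h ^ 2 / 2‖ ≤ ‖h‖ + ‖h ^ 2 / 2‖ := norm_add_le _ _
      _ = ‖h‖ + ‖h‖ ^ 2 / 2 := by rw [norm_div, norm_pow, Complex.norm_ofNat]
      _ < 1 := by nlinarith [norm_nonneg h]
  have hre := re_one_add_pos hsq
  rw [show 1 + (1 + h) ^ 2 = ((2 : ℝ) : ℂ) * (1 + (h + h ^ 2 / 2)) by push_cast; ring,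
    Complex.re_ofReal_mul]
  positivity

lemma re_one_add_sq_div_pos {h : ℂ} (hh : ‖h‖ < 1 / 2) : 0 < (1 + h ^ 2 / (2 * (1 + h))).re := by
  have hden : 1 / 2 ≤ ‖1 + h‖ := by
    have := norm_sub_le_norm_add (1 : ℂ) h
    rw [norm_one] at this
    linarith
  refine re_one_add_pos ?_
  rw [norm_div, norm_mul, norm_pow, Complex.norm_ofNat, div_lt_one (by linarith)]
  nlinarith [norm_nonneg h]

lemma cpow_mul_cpow_eq_tilt {h : ℂ} (hh : ‖h‖ < 1 / 2) (c x : ℝ) :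
    (1 + (1 + h) ^ 2) ^ (-c : ℂ) * (1 + h) ^ (2 * x + c : ℂ) =
      ((2 : ℝ) ^ c : ℝ)⁻¹ * tilt c x h := by
  have hre₁ := re_one_add_pos (hh.trans one_half_lt_one)
  have hre₂ := re_one_add_sq_div_pos hh
  have hne := ne_zero_of_re_pos hre₁
  have hfac : 1 + (1 + h) ^ 2 = ((2 : ℝ) : ℂ) * ((1 + h) * (1 + h ^ 2 / (2 * (1 + h)))) := by
    push_cast
    field_simp
    ring
  have hlog : Complex.log (1 + (1 + h) ^ 2) =
      Real.log 2 + (Complex.log (1 + h) + Complex.log (1 + h ^ 2 / (2 * (1 + h)))) := by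
    rw [hfac, Complex.log_ofReal_mul two_pos (mul_ne_zero hne (ne_zero_of_re_pos hre₂)),
      log_mul_of_re_pos hre₁ hre₂]
  rw [Complex.cpow_def_of_ne_zero (ne_zero_of_re_pos (re_one_add_one_add_sq_pos hh)),
    Complex.cpow_def_of_ne_zero hne, hlog, ← Real.rpow_neg zero_le_two,
    Real.rpow_def_of_pos two_pos, Complex.ofReal_exp, tilt, ← Complex.exp_add, ← Complex.exp_add]
  congr 1
  push_cast
  ring

variable {ι : Type*} {l : Filter ι}

lemma tendsto_mul_log_one_add {a g : ι → ℂ} {t : ℂ} (hg : Tendsto g l (𝓝 0))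
    (hag : Tendsto (fun i => a i * g i) l (𝓝 t)) :
    Tendsto (fun i => a i * Complex.log (1 + g i)) l (𝓝 t) := by
  have hderiv : HasDerivAt (fun w : ℂ => Complex.log (1 + w)) 1 0 := by
    simpa using ((hasDerivAt_id (0 : ℂ)).const_add 1).clog (by simp)
  have hslope := (continuousAt_dslope_same.2 hderiv.differentiableAt).tendsto.comp hg
  rw [dslope_same, hderiv.deriv] at hslope
  refine (mul_one t ▸ hag.mul hslope).congr fun i => ?_
  have := sub_smul_dslope (fun w : ℂ => Complex.log (1 + w)) 0 (g i)
  rw [sub_zero, smul_eq_mul, add_zero, Complex.log_one, sub_zero] at this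
  rw [Function.comp_apply, mul_assoc, this]

variable {c x : ι → ℝ} {h : ι → ℂ} {u : ℝ} {ζ : ℂ}

lemma tendsto_zero_of_sqrt_mul (hc : Tendsto c l atTop)
    (hh : Tendsto (fun i => √(c i) * h i) l (𝓝 ζ)) : Tendsto h l (𝓝 0) := by
  have hinv : Tendsto (fun i => ((√(c i))⁻¹ : ℂ)) l (𝓝 0) := by
    exact_mod_cast (Complex.continuous_ofReal.tendsto 0).comp
      (tendsto_inv_atTop_zero.comp (Real.tendsto_sqrt_atTop.comp hc))
  refine (zero_mul ζ ▸ hinv.mul hh).congr' ?_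
  filter_upwards [hc.eventually_gt_atTop 0] with i hi
  have : (√(c i) : ℂ) ≠ 0 := by exact_mod_cast (Real.sqrt_pos.2 hi).ne'
  rw [inv_mul_cancel_left₀ this]

lemma tendsto_mul_log_one_add_sq (hc : Tendsto c l atTop)
    (hh : Tendsto (fun i => √(c i) * h i) l (𝓝 ζ)) :
    Tendsto (fun i => c i * Complex.log (1 + h i ^ 2 / (2 * (1 + h i)))) l (𝓝 (ζ ^ 2 / 2)) := by
  have hh₀ := tendsto_zero_of_sqrt_mul hc hh
  have hden : Tendsto (fun i => 2 * (1 + h i)) l (𝓝 2) := by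
    simpa using (hh₀.const_add 1).const_mul 2
  refine tendsto_mul_log_one_add ?_ ?_
  · simpa [Pi.div_def] using (hh₀.pow 2).div hden two_ne_zero
  · refine ((hh.pow 2).div hden two_ne_zero).congr' ?_
    filter_upwards [hc.eventually_ge_atTop 0] with i hi
    have : (√(c i) : ℂ) ^ 2 = c i := by exact_mod_cast Real.sq_sqrt hi
    rw [Pi.div_apply, mul_pow, this, mul_div_assoc]

lemma tendsto_tilt (hc : Tendsto c l atTop) (hh : Tendsto (fun i => √(c i) * h i) l (𝓝 ζ))
    (hx : Tendsto (fun i => x i / √(c i)) l (𝓝 u)) :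
    Tendsto (fun i => tilt (c i) (x i) (h i)) l (𝓝 (Complex.exp (2 * u * ζ - ζ ^ 2 / 2))) := by
  have hx' : Tendsto (fun i => ((x i / √(c i) : ℝ) : ℂ)) l (𝓝 u) :=
    (Complex.continuous_ofReal.tendsto u).comp hx
  have hxh : Tendsto (fun i => 2 * x i * h i) l (𝓝 (2 * u * ζ)) := by
    refine ((hx'.const_mul 2).mul hh).congr' ?_
    filter_upwards [hc.eventually_gt_atTop 0] with i hi
    have : (√(c i) : ℂ) ≠ 0 := by exact_mod_cast (Real.sqrt_pos.2 hi).ne'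
    push_cast
    field_simp
  exact ((tendsto_mul_log_one_add (tendsto_zero_of_sqrt_mul hc hh) hxh).sub
    (tendsto_mul_log_one_add_sq hc hh)).cexp

lemma exists_norm_tilt_le (hc : Tendsto c l atTop)
    (hh : Tendsto (fun i => √(c i) * h i) l (𝓝 ζ)) (B : ℝ) :
    ∃ C, ∀ᶠ i in l, ∀ x : ℝ, |x| ≤ B * √(c i) → ‖tilt (c i) x (h i)‖ ≤ C := by
  have hlog := tendsto_mul_log_one_add (tendsto_zero_of_sqrt_mul hc hh) hh
  have hlog_sq := tendsto_mul_log_one_add_sq hc hh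
  refine ⟨Real.exp (2 * B * (‖ζ‖ + 1) + (‖ζ ^ 2 / 2‖ + 1)), ?_⟩
  filter_upwards [hlog.norm.eventually_le_const (lt_add_one _),
    hlog_sq.norm.eventually_le_const (lt_add_one _), hc.eventually_gt_atTop 0]
    with i h₁ h₂ hi x hx
  refine (Complex.norm_exp_le_exp_norm _).trans (Real.exp_le_exp.2 ((norm_sub_le _ _).trans
    (add_le_add ?_ h₂)))
  rw [norm_mul, Complex.norm_real, Real.norm_of_nonneg (Real.sqrt_nonneg _)] at h₁
  rw [norm_mul, norm_mul, Complex.norm_real, Complex.norm_ofNat, Real.norm_eq_abs]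
  have hB : 0 ≤ B :=
    nonneg_of_mul_nonneg_left ((abs_nonneg x).trans hx) (Real.sqrt_pos.2 hi)
  calc 2 * |x| * ‖Complex.log (1 + h i)‖
      ≤ 2 * (B * √(c i)) * ‖Complex.log (1 + h i)‖ := by gcongr
    _ = 2 * B * (√(c i) * ‖Complex.log (1 + h i)‖) := by ring
    _ ≤ 2 * B * (‖ζ‖ + 1) := by gcongr

end Tilt

section RiemannSum

section NormedSpace

variable {E : Type*} [NormedAddCommGroup E] [NormedSpace ℝ E] {ι : Type*} {l : Filter ι} {N : ι → ℕ}

lemma integral_floor_eq_sum [CompleteSpace E] (c : ℕ → E) (m : ℕ) :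
    ∫ x in (0 : ℝ)..m, c ⌊x⌋₊ = ∑ k ∈ range m, c k := by
  have hconst (k : ℕ) : ∀ᵐ x : ℝ, x ∈ Set.uIoc (k : ℝ) (k + 1 : ℕ) → c k = c ⌊x⌋₊ := by
    rw [Set.uIoc_of_le (by simp)]
    filter_upwards [Ioo_ae_eq_Ioc.mem_iff] with x hx hx'
    obtain ⟨hkx, hxk⟩ := hx.2 hx'
    rw [(Nat.floor_eq_iff (k.cast_nonneg.trans hkx.le)).2 ⟨hkx.le, by exact_mod_cast hxk⟩]
  have hint (k : ℕ) :
      IntervalIntegrable (fun x : ℝ => c ⌊x⌋₊) volume (k : ℝ) (k + 1 : ℕ) :=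
    intervalIntegrable_const.congr_ae ((ae_restrict_iff' measurableSet_uIoc).2 (hconst k))
  have hsum := intervalIntegral.sum_integral_adjacent_intervals (a := fun k : ℕ => (k : ℝ))
    (n := m) fun k _ => hint k
  rw [Nat.cast_zero] at hsum
  rw [← hsum]
  refine Finset.sum_congr rfl fun k _ => ?_
  rw [← intervalIntegral.integral_congr_ae (hconst k), intervalIntegral.integral_const,
    Nat.cast_succ, add_sub_cancel_left, one_smul]

lemma sum_eq_integral_smul_floor [CompleteSpace E] (c : ℕ → E) (m : ℕ) :
    ∑ k ∈ range m, c k = ∫ s in (0 : ℝ)..1, (m : ℝ) • c ⌊s * m⌋₊ := by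
  rw [intervalIntegral.integral_smul,
    intervalIntegral.smul_integral_comp_mul_right (fun x => c ⌊x⌋₊), zero_mul, one_mul,
    integral_floor_eq_sum]

/-- The weights `c i k`, `k < N i`, have density `φ` on `(0, 1)` along `l`: the rescaled weights
`N i • c i k` are bounded, and converge to `φ s` whenever `k / N i → s`. -/
structure HasProfile (l : Filter ι) (N : ι → ℕ) (c : ι → ℕ → E) (φ : ℝ → E) : Prop where
  exists_bound : ∃ C, ∀ᶠ i in l, ∀ k < N i, ‖(N i : ℝ) • c i k‖ ≤ C
  tendsto : ∀ s ∈ Set.Ioo (0 : ℝ) 1, ∀ k : ι → ℕ, Tendsto (fun i => (k i / N i : ℝ)) l (𝓝 s) →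
    Tendsto (fun i => (N i : ℝ) • c i (k i)) l (𝓝 (φ s))

lemma tendsto_floor_mul_div (hN : Tendsto N l atTop) {m : ι → ℕ} {σ s : ℝ} (hs : 0 ≤ s)
    (hm : Tendsto (fun i => (m i / N i : ℝ)) l (𝓝 σ)) :
    Tendsto (fun i => (⌊s * m i⌋₊ / N i : ℝ)) l (𝓝 (s * σ)) := by
  have hinv : Tendsto (fun i => (1 / N i : ℝ)) l (𝓝 0) :=
    (tendsto_natCast_atTop_atTop.comp hN).const_div_atTop 1
  have hlower : Tendsto (fun i => s * (m i / N i : ℝ) - 1 / N i) l (𝓝 (s * σ)) := by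
    simpa using (hm.const_mul s).sub hinv
  refine tendsto_of_tendsto_of_tendsto_of_le_of_le hlower (hm.const_mul s) (fun i => ?_)
    fun i => ?_
  · simp only [mul_div_assoc', ← sub_div]
    gcongr
    exact (Nat.sub_one_lt_floor _).le
  · simp only [mul_div_assoc']
    gcongr
    exact Nat.floor_le (by positivity)

lemma HasProfile.tendsto_sum_range [CompleteSpace E] [l.IsCountablyGenerated]
    {c : ι → ℕ → E} {φ : ℝ → E} (hc : HasProfile l N c φ) (hN : Tendsto N l atTop) {m : ι → ℕ}
    (hmN : ∀ᶠ i in l, m i ≤ N i) {σ : ℝ} (hσ : σ ∈ Set.Ioc (0 : ℝ) 1)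
    (hm : Tendsto (fun i => (m i / N i : ℝ)) l (𝓝 σ)) :
    Tendsto (fun i => ∑ k ∈ range (m i), c i k) l (𝓝 (∫ s in (0 : ℝ)..σ, φ s)) := by
  obtain ⟨C, hC⟩ := hc.exists_bound
  have hlim : ∫ s in (0 : ℝ)..σ, φ s = ∫ s in (0 : ℝ)..1, σ • φ (s * σ) := by
    rw [intervalIntegral.integral_smul, intervalIntegral.smul_integral_comp_mul_right,
      zero_mul, one_mul]
  simp only [sum_eq_integral_smul_floor, hlim]
  have hIoo : ∀ᵐ s : ℝ, s ∈ Set.uIoc 0 1 → s ∈ Set.Ioo (0 : ℝ) 1 := by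
    rw [Set.uIoc_of_le zero_le_one]
    exact Ioo_ae_eq_Ioc.mem_iff.mono fun _ => Iff.mpr
  refine intervalIntegral.tendsto_integral_filter_of_dominated_convergence (fun _ => C)
    (Eventually.of_forall fun i => ?_) ?_ intervalIntegrable_const ?_
  · exact (((StronglyMeasurable.of_discrete (f := c i)).comp_measurable
      (Nat.measurable_floor.comp (measurable_id.mul_const _))).const_smul _).aestronglyMeasurable
  · filter_upwards [hC, hmN, hN.eventually_gt_atTop 0] with i hCi hmi hNi
    filter_upwards [hIoo] with s hs hs'
    obtain ⟨hs₀, hs₁⟩ := hs hs'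
    have hfloor : ⌊s * m i⌋₊ < N i := by
      refine (Nat.floor_lt (by positivity)).2 ?_
      calc s * m i ≤ s * N i := by gcongr
        _ < N i := mul_lt_of_lt_one_left (by exact_mod_cast hNi) hs₁
    refine le_trans ?_ (hCi _ hfloor)
    simp only [norm_smul, Real.norm_natCast]
    gcongr
  · filter_upwards [hIoo] with s hs hs'
    obtain ⟨hs₀, hs₁⟩ := hs hs'
    have hsσ : s * σ ∈ Set.Ioo 0 1 :=
      ⟨mul_pos hs₀ hσ.1, mul_lt_one_of_nonneg_of_lt_one_left hs₀.le hs₁ hσ.2⟩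
    have hval := hc.tendsto (s * σ) hsσ _ (tendsto_floor_mul_div hN hs₀.le hm)
    refine (hm.smul hval).congr' ?_
    filter_upwards [hN.eventually_gt_atTop 0] with i hi
    have : (N i : ℝ) ≠ 0 := by positivity
    rw [smul_smul, div_mul_cancel₀ _ this]

end NormedSpace

variable {A : Type*} [NormedRing A] [NormedAlgebra ℝ A] {ι : Type*} {l : Filter ι} {N : ι → ℕ}
  {a b : ι → ℕ → A} {φ ψ : ℝ → A}

lemma HasProfile.mul_sum_range [CompleteSpace A] [l.IsCountablyGenerated]
    (ha : HasProfile l N a φ) (hb : HasProfile l N b ψ) (hN : Tendsto N l atTop) :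
    HasProfile l N (fun i k => a i k * ∑ j ∈ range (k + 1), b i j)
      (fun s => φ s * ∫ t in (0 : ℝ)..s, ψ t) where
  exists_bound := by
    obtain ⟨C, hC⟩ := ha.exists_bound
    obtain ⟨D, hD⟩ := hb.exists_bound
    refine ⟨C * D, ?_⟩
    filter_upwards [hC, hD] with i hCi hDi k hk
    have hN : (0 : ℝ) < N i := by exact_mod_cast k.zero_le.trans_lt hk
    have hterm : ∀ j ∈ range (k + 1), ‖b i j‖ ≤ D / N i := fun j hj => by
      have := hDi j (by rw [Finset.mem_range] at hj; lia)
      rwa [norm_smul, Real.norm_natCast, mul_comm, ← le_div_iff₀ hN] at this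
    have hsum : ‖∑ j ∈ range (k + 1), b i j‖ ≤ D := by
      have hD₀ := (norm_nonneg _).trans (hDi k hk)
      have hk' : ((k + 1 : ℕ) : ℝ) ≤ N i := by exact_mod_cast hk
      refine (norm_sum_le_of_le _ hterm).trans ?_
      rw [Finset.sum_const, Finset.card_range, nsmul_eq_mul, mul_div_assoc', div_le_iff₀ hN,
        mul_comm]
      gcongr
    rw [← smul_mul_assoc]
    exact (norm_mul_le _ _).trans (mul_le_mul (hCi k hk) hsum (norm_nonneg _)
      ((norm_nonneg _).trans (hCi k hk)))
  tendsto s hs k hk := by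
    have hsucc : Tendsto (fun i => ((k i + 1 : ℕ) / N i : ℝ)) l (𝓝 s) := by
      have := hk.add ((tendsto_natCast_atTop_atTop.comp hN).const_div_atTop (1 : ℝ))
      simpa [add_div] using this
    have hle : ∀ᶠ i in l, k i + 1 ≤ N i := by
      filter_upwards [hsucc.eventually_lt_const hs.2, hN.eventually_gt_atTop 0] with i hi hNi
      rw [div_lt_one (by exact_mod_cast hNi)] at hi
      exact_mod_cast hi.le
    simpa only [smul_mul_assoc] using (ha.tendsto s hs k hk).mul
      (hb.tendsto_sum_range hN hle ⟨hs.1, hs.2.le⟩ hsucc)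

/-- The sum of `a i * b j` over `j ≤ i < N`. -/
def orderedSum (N : ℕ) (a b : ℕ → A) : A := ∑ i ∈ range N, a i * ∑ j ∈ range (i + 1), b j

lemma tendsto_orderedSum [CompleteSpace A] [l.IsCountablyGenerated] (hN : Tendsto N l atTop)
    (ha : HasProfile l N a φ) (hb : HasProfile l N b ψ) :
    Tendsto (fun i => orderedSum (N i) (a i) (b i)) l
      (𝓝 (∫ s in (0 : ℝ)..1, φ s * ∫ t in (0 : ℝ)..s, ψ t)) := by
  refine (ha.mul_sum_range hb hN).tendsto_sum_range hN (Eventually.of_forall fun i => le_rfl)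
    ⟨one_pos, le_rfl⟩ (tendsto_const_nhds.congr' ?_)
  filter_upwards [hN.eventually_gt_atTop 0] with i hi
  exact (div_self (by positivity)).symm

end RiemannSum

section ErrorFunction

lemma hasDerivAt_cerf (z : ℂ) : HasDerivAt cerf (2 / √π * Complex.exp (-z ^ 2)) z := by
  obtain ⟨G, hG⟩ := Differentiable.isExactOn_univ (f := fun z : ℂ => Complex.exp (-z ^ 2))
    (by fun_prop)
  replace hG (z : ℂ) : HasDerivAt G (Complex.exp (-z ^ 2)) z := hG z (Set.mem_univ z)
  have hcerf : cerf = fun z => 2 / √π * (G z - G 0) := by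
    funext z
    have hline (s : ℝ) :
        HasDerivAt (fun s : ℝ => G (s * z)) (z * Complex.exp (-((s : ℂ) ^ 2 * z ^ 2))) s := by
      refine ((hG (s * z)).comp s (Complex.ofRealCLM.hasDerivAt.mul_const z)).congr_deriv ?_
      rw [mul_pow, Complex.ofRealCLM_apply, Complex.ofReal_one, one_mul, mul_comm]
    rw [cerf, intervalIntegral.integral_eq_sub_of_hasDerivAt (fun s _ => hline s)
      (Continuous.intervalIntegrable (by fun_prop) _ _), Complex.ofReal_one, one_mul,
      Complex.ofReal_zero, zero_mul]
  rw [hcerf]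
  exact ((hG z).sub_const _).const_mul _

/-- The density at `u` of the Gaussian law with mean `z` and variance `1 / 4`, continued to
complex means. -/
def gaussDensity (z : ℂ) (u : ℝ) : ℂ := √(2 / π) * Complex.exp (-2 * (z - u) ^ 2)

lemma continuous_gaussDensity (z : ℂ) : Continuous (gaussDensity z) := by
  unfold gaussDensity
  fun_prop

lemma hasDerivAt_fz (z : ℂ) (u : ℝ) : HasDerivAt (fz z) (gaussDensity z u) u := by
  have harg : HasDerivAt (fun u : ℝ => (√2 : ℂ) * (z - u)) (√2 * -1) u :=
    (Complex.ofRealCLM.hasDerivAt.const_sub z).const_mul _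
  refine ((((hasDerivAt_cerf _).comp u harg).const_sub 1).const_mul (1 / 2 : ℂ)).congr_deriv ?_
  have hsq : (√2 : ℂ) ^ 2 = 2 := by exact_mod_cast Real.sq_sqrt zero_le_two
  rw [gaussDensity, mul_pow, hsq, Real.sqrt_div zero_le_two, neg_mul]
  push_cast
  ring

lemma continuous_fz (z : ℂ) : Continuous (fz z) :=
  continuous_iff_continuousAt.2 fun u => (hasDerivAt_fz z u).continuousAt

lemma integral_gaussDensity (z : ℂ) (a b : ℝ) : ∫ u in a..b, gaussDensity z u = fz z b - fz z a :=
  intervalIntegral.integral_eq_sub_of_hasDerivAt (fun u _ => hasDerivAt_fz z u)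
    ((continuous_gaussDensity z).intervalIntegrable _ _)

/-- The integral of `gaussDensity z u * gaussDensity w v` over the triangle `-α ≤ v ≤ u ≤ α`. -/
def orderedIntegral (α : ℝ) (z w : ℂ) : ℂ :=
  ∫ u in (-α)..α, gaussDensity z u * ∫ v in (-α)..u, gaussDensity w v

lemma integral_unitInterval_eq_orderedIntegral (α : ℝ) (z w : ℂ) :
    ∫ s in (0 : ℝ)..1, (2 * α) • gaussDensity z (2 * α * s - α) *
      ∫ t in (0 : ℝ)..s, (2 * α) • gaussDensity w (2 * α * t - α) = orderedIntegral α z w := by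
  have hlower : 2 * α * 0 - α = -α := by ring
  have hupper : 2 * α * 1 - α = α := by ring
  simp only [intervalIntegral.integral_smul, intervalIntegral.smul_integral_comp_mul_sub,
    smul_mul_assoc]
  rw [intervalIntegral.smul_integral_comp_mul_sub
    (fun u => gaussDensity z u * ∫ v in (2 * α * 0 - α)..u, gaussDensity w v), hlower, hupper,
    orderedIntegral]

lemma continuous_orderedIntegral (α : ℝ) :
    Continuous fun q : ℂ × ℂ => orderedIntegral α q.1 q.2 := by
  have hinner : Continuous fun p : (ℂ × ℂ) × ℝ => ∫ v in (-α)..p.2, gaussDensity p.1.2 v := by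
    refine intervalIntegral.continuous_parametric_intervalIntegral_of_continuous ?_ continuous_snd
    unfold gaussDensity Function.uncurry
    fun_prop
  have houter : Continuous fun p : (ℂ × ℂ) × ℝ => gaussDensity p.1.1 p.2 := by
    unfold gaussDensity
    fun_prop
  exact intervalIntegral.continuous_parametric_intervalIntegral_of_continuous'
    (houter.mul hinner) _ _

lemma orderedIntegral_eq (α : ℝ) (z w : ℂ) :
    orderedIntegral α z w =
      (∫ u in (-α)..α, gaussDensity z u * fz w u) - (fz z α - fz z (-α)) * fz w (-α) := by
  have hz := continuous_gaussDensity z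
  have hw := continuous_fz w
  simp only [orderedIntegral, integral_gaussDensity, mul_sub]
  rw [intervalIntegral.integral_sub (Continuous.intervalIntegrable (by fun_prop) _ _)
    (Continuous.intervalIntegrable (by fun_prop) _ _), intervalIntegral.integral_mul_const,
    integral_gaussDensity]

lemma integral_Wr (α : ℝ) (z w : ℂ) :
    ∫ u in (-α)..α, Wr w z u = (∫ u in (-α)..α, gaussDensity z u * fz w u) -
      ∫ u in (-α)..α, gaussDensity w u * fz z u := by
  have hint (z w : ℂ) :
      IntervalIntegrable (fun u => gaussDensity z u * fz w u) volume (-α) α :=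
    ((continuous_gaussDensity z).mul (continuous_fz w)).intervalIntegrable _ _
  rw [← intervalIntegral.integral_sub (hint z w) (hint w z)]
  refine intervalIntegral.integral_congr fun u _ => ?_
  rw [Wr, (hasDerivAt_fz z u).deriv, (hasDerivAt_fz w u).deriv, mul_comm, mul_comm (fz z u)]

lemma exp_mul_kweak (ρ : ℝ) (z w : ℂ) :
    Complex.exp (-z ^ 2 - w ^ 2) * kweak ρ z w = √π *
      (orderedIntegral (ρ / (2 * √2)) z w - orderedIntegral (ρ / (2 * √2)) w z) := by
  have hexp : Complex.exp (-z ^ 2 - w ^ 2) * Complex.exp (z ^ 2 + w ^ 2) = 1 := by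
    rw [← Complex.exp_add, ← neg_add', neg_add_cancel, Complex.exp_zero]
  rw [kweak, integral_Wr, ← mul_assoc, mul_left_comm, hexp, orderedIntegral_eq, orderedIntegral_eq]
  ring

end ErrorFunction

section ExactRewriting

/-- The tilted binomial weights at the `N` points of spacing `1` that are centred, up to the
offset `θ - 1 / 2`, at the origin. -/
def latticeRow (N : ℕ) (c θ : ℝ) (h : ℂ) (k : ℕ) : ℂ :=
  binomWeight c (k - N / 2 + θ) * tilt c (k - N / 2 + θ) h

lemma latticeRow_eq {h : ℂ} (hh : ‖h‖ < 1 / 2) (N : ℕ) (c θ : ℝ) (k : ℕ) :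
    latticeRow N c θ h k = Real.Gamma (c + 1) *
      ((1 + (1 + h) ^ 2) ^ (-c : ℂ) * (1 + h) ^ ((2 * (k - N / 2 + θ) + c : ℝ) : ℂ) /
        ((Real.Gamma (c / 2 + 1 + (k - N / 2 + θ)) : ℂ) *
          Real.Gamma (c / 2 + 1 - (k - N / 2 + θ)))) := by
  have htilt := cpow_mul_cpow_eq_tilt hh c (k - N / 2 + θ)
  rw [← Complex.ofReal_ofNat, ← Complex.ofReal_mul, ← Complex.ofReal_add] at htilt
  rw [htilt, latticeRow, binomWeight]
  push_cast
  ring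

/-- The exponent `n + L - 1 / 2` of the weight in `resc` when `L = n - N`; it is also the number of
trials of the binomial weights that make up the kernel. -/
def weightExponent (N : ℕ) (n : ℝ) : ℝ := 2 * n - N - 1 / 2

lemma cpow_mul_cpow_mul_GK {N : ℕ} {n c : ℝ} (hc : c = weightExponent N n) (hc₀ : 0 < c + 1)
    {h k : ℂ} (hh : ‖h‖ < 1 / 2) (hk : ‖k‖ < 1 / 2) :
    (1 + (1 + h) ^ 2) ^ (-c : ℂ) * (1 + (1 + k) ^ 2) ^ (-c : ℂ) * GK N n (n - N) (1 + h) (1 + k) =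
      ((π * Real.Gamma (2 * c + 3) / 2 ^ (2 * c + 2) / Real.Gamma (c + 1) ^ 2 : ℝ) : ℂ) *
        orderedSum N (latticeRow N c (3 / 4) h) (latticeRow N c (1 / 4) k) := by
  have hΓ₀ : (Real.Gamma (c + 1) : ℂ) ≠ 0 := by exact_mod_cast (Real.Gamma_pos_of_pos hc₀).ne'
  have hterm {g : ℂ} (hg : g ≠ 0) (A B a b P T D₁ D₂ D₃ D₄ : ℂ) :
      A * B * (P / T * (a * b / (D₁ * D₂ * D₃ * D₄))) =
        P / T / g ^ 2 * (g * (A * a / (D₁ * D₂)) * (g * (B * b / (D₄ * D₃)))) := by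
    field_simp
  rw [weightExponent] at hc
  have hΓ : 2 * n + 2 * (n - N) + 2 = 2 * c + 3 := by linarith
  have hexp : 2 * n + 2 * (n - N) + 1 = 2 * c + 2 := by linarith
  have htwo : (2 : ℂ) ^ ((2 * n + 2 * (n - N) + 1 : ℝ) : ℂ) = ((2 ^ (2 * c + 2) : ℝ) : ℂ) := by
    rw [Complex.ofReal_cpow zero_le_two, Complex.ofReal_ofNat, hexp]
  simp only [GK, orderedSum, Complex.Gamma_ofReal, Finset.mul_sum, hΓ, htwo]
  refine Finset.sum_congr rfl fun i _ => Finset.sum_congr rfl fun j _ => ?_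
  have e₁ : 2 * ((i : ℝ) - N / 2 + 3 / 4) + c = 2 * i + 2 * (n - N) + 1 := by linarith
  have e₂ : 2 * ((j : ℝ) - N / 2 + 1 / 4) + c = 2 * j + 2 * (n - N) := by linarith
  have e₃ : c / 2 + 1 + ((i : ℝ) - N / 2 + 3 / 4) = i + (n - N) + 3 / 2 := by linarith
  have e₄ : c / 2 + 1 - ((i : ℝ) - N / 2 + 3 / 4) = n - i := by linarith
  have e₅ : c / 2 + 1 + ((j : ℝ) - N / 2 + 1 / 4) = j + (n - N) + 1 := by linarith
  have e₆ : c / 2 + 1 - ((j : ℝ) - N / 2 + 1 / 4) = n - j + 1 / 2 := by linarith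
  rw [latticeRow_eq hh, latticeRow_eq hk, e₁, e₂, e₃, e₄, e₅, e₆, hterm hΓ₀]
  push_cast
  rfl

/-- The scalar factor of the rescaled kernel at `p = 1`, in terms of the weight exponent `c`. -/
def prefactor (c : ℝ) : ℝ :=
  (1 + 1 ^ 2 : ℝ) ^ (-3 : ℝ) * ((c + 1 / 2) / 4) ^ (-(3 / 2) : ℝ) *
    (π * Real.Gamma (2 * c + 3) / 2 ^ (2 * c + 2) / Real.Gamma (c + 1) ^ 2)

lemma pi_mul_Gamma_div {c : ℝ} (hc : 0 < c + 1) :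
    π * Real.Gamma (2 * c + 3) / 2 ^ (2 * c + 2) =
      √π * (Real.Gamma (c + 1 + 1 / 2) * ((c + 1) * Real.Gamma (c + 1))) := by
  have hdup := Real.Gamma_mul_Gamma_add_half (c + 1 + 1 / 2)
  rw [add_assoc _ (1 / 2 : ℝ), add_halves, Real.Gamma_add_one hc.ne',
    show 2 * (c + 1 + 1 / 2) = 2 * c + 3 by ring, show 1 - (2 * c + 3) = -(2 * c + 2) by ring,
    Real.rpow_neg zero_le_two] at hdup
  rw [hdup, mul_left_comm, mul_right_comm, Real.mul_self_sqrt Real.pi_pos.le]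
  ring

lemma prefactor_eq {c : ℝ} (hc : 0 < c) :
    prefactor c = √π * (Real.Gamma (c + 1 + 1 / 2) / (Real.Gamma (c + 1) * √(c + 1))) *
      ((c + 1) / (c + 1 / 2)) ^ (3 / 2 : ℝ) := by
  have : 0 < Real.Gamma (c + 1) := Real.Gamma_pos_of_pos (by positivity)
  have hthree_halves (x : ℝ) (hx : 0 < x) : x ^ (3 / 2 : ℝ) = x * √x := by
    rw [show (3 / 2 : ℝ) = 1 + 1 / 2 by norm_num, Real.rpow_add hx, Real.rpow_one,
      Real.sqrt_eq_rpow]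
  have hfour : √(4 : ℝ) = 2 := by
    rw [show (4 : ℝ) = 2 ^ 2 by norm_num, Real.sqrt_sq zero_le_two]
  have heighth : (1 + 1 ^ 2 : ℝ) ^ (-3 : ℝ) = 1 / 8 := by
    rw [Real.rpow_neg (by norm_num)]
    norm_num
  rw [prefactor, pi_mul_Gamma_div (by positivity), heighth, Real.rpow_neg (by positivity),
    Real.div_rpow (by positivity) (by positivity), Real.div_rpow (by positivity) (by positivity),
    hthree_halves _ (by positivity), hthree_halves _ (by positivity),
    hthree_halves _ (by positivity), hfour]
  field_simp
  norm_num

lemma tendsto_prefactor : Tendsto prefactor atTop (𝓝 √π) := by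
  have hΓ := tendsto_Gamma_add_half_div.comp
    (tendsto_atTop_add_const_right atTop (1 : ℝ) tendsto_id)
  have hpow : Tendsto (fun c : ℝ => ((c + 1) / (c + 1 / 2)) ^ (3 / 2 : ℝ)) atTop (𝓝 1) := by
    have := (tendsto_add_const_div_self (1 / 2)).comp
      (tendsto_atTop_add_const_right atTop (1 / 2 : ℝ) tendsto_id)
    simp only [Function.comp_def, id, add_assoc, add_halves] at this
    simpa only [Real.one_rpow] using this.rpow_const (p := 3 / 2) (Or.inl one_ne_zero)
  have hlim := (hΓ.const_mul √π).mul hpow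
  rw [mul_one, mul_one] at hlim
  refine hlim.congr' ?_
  filter_upwards [eventually_gt_atTop 0] with c hc
  exact (prefactor_eq hc).symm

lemma mul_dlt_one {N : ℕ} (hN : 0 < N) (n L : ℝ) : N * dlt N n L 1 = (n + L) / 4 := by
  have hquarter : (1 + 1 ^ 2 : ℝ) ^ (-2 : ℝ) = 1 / 4 := by
    rw [Real.rpow_neg (by norm_num)]
    norm_num
  rw [dlt, hquarter]
  field_simp

lemma sc_one {N : ℕ} (hN : 0 < N) (n L : ℝ) : sc N n L 1 = √(n + L) / 2 := by
  rw [sc, mul_dlt_one hN, Real.sqrt_div' _ zero_le_four, show (4 : ℝ) = 2 ^ 2 by norm_num,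
    Real.sqrt_sq zero_le_two]

lemma resc_one_eq {N : ℕ} (hN : 0 < N) {n c : ℝ} (hc : c = weightExponent N n) (hc₀ : 0 < c + 1)
    {z w h k : ℂ} (hh : ‖h‖ < 1 / 2) (hk : ‖k‖ < 1 / 2)
    (hz : h = z / sc N n (n - N) 1) (hw : k = w / sc N n (n - N) 1) :
    resc N n (n - N) 1 z w = prefactor c *
      (orderedSum N (latticeRow N c (3 / 4) h) (latticeRow N c (1 / 4) k) -
        orderedSum N (latticeRow N c (3 / 4) k) (latticeRow N c (1 / 4) h)) := by
  have hexp : ((-(n + (n - N) - 1 / 2) : ℝ) : ℂ) = -c := by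
    rw [hc, weightExponent]
    push_cast
    ring
  have hM : n + (n - N) = c + 1 / 2 := by rw [hc, weightExponent]; ring
  have hhk := cpow_mul_cpow_mul_GK hc hc₀ hh hk
  have hkh := cpow_mul_cpow_mul_GK hc hc₀ hk hh
  rw [resc, ← hz, ← hw, Complex.ofReal_one, hexp, mul_dlt_one hN, hM, KK,
    mul_cpow_of_re_pos (re_one_add_one_add_sq_pos hh) (re_one_add_one_add_sq_pos hk), mul_assoc,
    mul_sub, hhk, mul_comm (_ ^ _), hkh, prefactor]
  push_cast
  ring

end ExactRewriting

section Limit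

variable {ι : Type*} {l : Filter ι} {N : ι → ℕ} {c : ι → ℝ} {h : ι → ℂ} {z : ℂ} {α : ℝ}

lemma natCast_smul_latticeRow {N : ℕ} {c : ℝ} (hc : 0 < c) (θ : ℝ) (h : ℂ) (k : ℕ) :
    (N : ℝ) • latticeRow N c θ h k =
      ((N / √c * (√c * binomWeight c (k - N / 2 + θ)) : ℝ) : ℂ) * tilt c (k - N / 2 + θ) h := by
  rw [latticeRow, ← mul_assoc, div_mul_cancel₀ _ (Real.sqrt_pos.2 hc).ne', Complex.real_smul,
    ← mul_assoc, Complex.ofReal_mul]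

lemma exists_norm_latticeRow_le (hN : Tendsto N l atTop) (hc : Tendsto c l atTop)
    (hNc : Tendsto (fun i => N i / √(c i)) l (𝓝 (2 * α)))
    (hh : Tendsto (fun i => √(c i) * h i) l (𝓝 (2 * z))) (θ : ℝ) :
    ∃ C, ∀ᶠ i in l, ∀ k < N i, ‖(N i : ℝ) • latticeRow (N i) (c i) θ (h i) k‖ ≤ C := by
  set B := 2 * α + 1
  obtain ⟨C, hC⟩ := exists_norm_tilt_le hc hh B
  refine ⟨B * 1 * C, ?_⟩
  filter_upwards [hC, hc.eventually eventually_abs_sqrt_mul_binomWeight_le_one,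
    hc.eventually_gt_atTop 0, (Real.tendsto_sqrt_atTop.comp hc).eventually_ge_atTop (2 * B),
    (tendsto_natCast_atTop_atTop.comp hN).eventually_ge_atTop (2 * |θ|),
    hNc.eventually_lt_const (lt_add_one _)] with i hCi hW hci hsqrt hθ hNB k hk
  have hci' := Real.sqrt_pos.2 hci
  have hB : 0 ≤ B := (div_nonneg (N i).cast_nonneg hci'.le).trans hNB.le
  have hx : |(k : ℝ) - N i / 2 + θ| ≤ B * √(c i) := by
    have hk' : (k : ℝ) ≤ N i := by exact_mod_cast hk.le
    have hk₀ : (0 : ℝ) ≤ k := k.cast_nonneg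
    rw [div_lt_iff₀ hci'] at hNB
    rw [Function.comp_apply] at hθ
    refine le_trans ?_ hNB.le
    rw [abs_le]
    constructor <;> linarith [le_abs_self θ, neg_abs_le θ]
  have hx' : |(k : ℝ) - N i / 2 + θ| < c i / 2 + 1 := by
    have := Real.sq_sqrt hci.le
    rw [Function.comp_apply] at hsqrt
    nlinarith
  rw [natCast_smul_latticeRow hci, norm_mul, Complex.norm_real, norm_mul, Real.norm_eq_abs,
    Real.norm_eq_abs, abs_of_nonneg (by positivity)]
  gcongr
  · exact hW _ hx'
  · exact hCi _ hx

lemma tendsto_lattice_div_sqrt (hN : Tendsto N l atTop) (hc : Tendsto c l atTop)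
    (hNc : Tendsto (fun i => N i / √(c i)) l (𝓝 (2 * α))) (θ : ℝ) {s : ℝ} {k : ι → ℕ}
    (hk : Tendsto (fun i => (k i / N i : ℝ)) l (𝓝 s)) :
    Tendsto (fun i => (k i - N i / 2 + θ) / √(c i)) l (𝓝 (2 * α * s - α)) := by
  have hoffset := (Real.tendsto_sqrt_atTop.comp hc).const_div_atTop θ
  have hlim := (hNc.mul (hk.sub_const (1 / 2))).add hoffset
  rw [show 2 * α * (s - 1 / 2) + 0 = 2 * α * s - α by ring] at hlim
  refine hlim.congr' ?_
  filter_upwards [hN.eventually_gt_atTop 0] with i hi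
  have : (N i : ℝ) ≠ 0 := by positivity
  rw [Function.comp_apply]
  field_simp

lemma gaussDensity_eq (z : ℂ) (u : ℝ) :
    gaussDensity z u = ((√(2 / π) * Real.exp (-2 * u ^ 2) : ℝ) : ℂ) *
      Complex.exp (2 * u * (2 * z) - (2 * z) ^ 2 / 2) := by
  rw [gaussDensity]
  push_cast
  rw [mul_assoc, ← Complex.exp_add]
  ring_nf

lemma hasProfile_latticeRow (hN : Tendsto N l atTop) (hc : Tendsto c l atTop)
    (hNc : Tendsto (fun i => N i / √(c i)) l (𝓝 (2 * α)))
    (hh : Tendsto (fun i => √(c i) * h i) l (𝓝 (2 * z))) (θ : ℝ) :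
    HasProfile l N (fun i => latticeRow (N i) (c i) θ (h i))
      (fun s => (2 * α) • gaussDensity z (2 * α * s - α)) where
  exists_bound := exists_norm_latticeRow_le hN hc hNc hh θ
  tendsto s _ k hk := by
    have hx := tendsto_lattice_div_sqrt hN hc hNc θ hk
    have hweight := (Complex.continuous_ofReal.tendsto _).comp
      (hNc.mul (tendsto_sqrt_mul_binomWeight hc hx))
    have hlim := hweight.mul (tendsto_tilt hc hh hx)
    rw [Complex.ofReal_mul, mul_assoc, ← gaussDensity_eq, ← Complex.real_smul] at hlim
    refine hlim.congr' ?_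
    filter_upwards [hc.eventually_gt_atTop 0] with i hi
    rw [natCast_smul_latticeRow hi, Function.comp_apply]

lemma tendsto_orderedSum_latticeRow [l.IsCountablyGenerated] {k : ι → ℂ} {w : ℂ}
    (hN : Tendsto N l atTop) (hc : Tendsto c l atTop)
    (hNc : Tendsto (fun i => N i / √(c i)) l (𝓝 (2 * α)))
    (hh : Tendsto (fun i => √(c i) * h i) l (𝓝 (2 * z)))
    (hk : Tendsto (fun i => √(c i) * k i) l (𝓝 (2 * w))) (θ θ' : ℝ) :
    Tendsto (fun i => orderedSum (N i) (latticeRow (N i) (c i) θ (h i))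
      (latticeRow (N i) (c i) θ' (k i))) l (𝓝 (orderedIntegral α z w)) :=
  integral_unitInterval_eq_orderedIntegral α z w ▸ tendsto_orderedSum hN
    (hasProfile_latticeRow hN hc hNc hh θ) (hasProfile_latticeRow hN hc hNc hk θ')

variable {n : ι → ℝ} {ρ : ℝ}

lemma tendsto_weightExponent_div (hn : Tendsto n l atTop)
    (hNn : Tendsto (fun i => N i / √(n i)) l (𝓝 ρ)) :
    Tendsto (fun i => weightExponent (N i) (n i) / n i) l (𝓝 2) := by
  have hNn₀ := hNn.div_atTop (Real.tendsto_sqrt_atTop.comp hn)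
  have hlim := (hNn₀.const_sub 2).sub (hn.const_div_atTop (1 / 2))
  rw [sub_zero, sub_zero] at hlim
  refine hlim.congr' ?_
  filter_upwards [hn.eventually_gt_atTop 0] with i hi
  rw [Function.comp_apply, div_div, Real.mul_self_sqrt hi.le, weightExponent]
  field_simp

lemma tendsto_weightExponent_atTop (hn : Tendsto n l atTop)
    (hNn : Tendsto (fun i => N i / √(n i)) l (𝓝 ρ)) :
    Tendsto (fun i => weightExponent (N i) (n i)) l atTop := by
  refine (hn.atTop_mul_pos two_pos (tendsto_weightExponent_div hn hNn)).congr' ?_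
  filter_upwards [hn.eventually_gt_atTop 0] with i hi
  rw [mul_div_cancel₀ _ hi.ne']

lemma tendsto_div_sqrt_weightExponent (hn : Tendsto n l atTop)
    (hNn : Tendsto (fun i => N i / √(n i)) l (𝓝 ρ)) :
    Tendsto (fun i => N i / √(weightExponent (N i) (n i))) l (𝓝 (2 * (ρ / (2 * √2)))) := by
  rw [← mul_div_assoc, mul_div_mul_left _ _ two_ne_zero]
  refine (hNn.div (tendsto_weightExponent_div hn hNn).sqrt (by positivity)).congr' ?_
  filter_upwards [hn.eventually_gt_atTop 0] with i hi
  rw [Pi.div_apply, Real.sqrt_div' _ hi.le, div_div_div_cancel_right₀ (Real.sqrt_pos.2 hi).ne']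

lemma tendsto_sqrt_mul_div_sc (hN : Tendsto N l atTop) (hn : Tendsto n l atTop)
    (hNn : Tendsto (fun i => N i / √(n i)) l (𝓝 ρ)) {z : ι → ℂ} {z₀ : ℂ}
    (hz : Tendsto z l (𝓝 z₀)) :
    Tendsto (fun i => √(weightExponent (N i) (n i)) * (z i / sc (N i) (n i) (n i - N i) 1)) l
      (𝓝 (2 * z₀)) := by
  have hc := tendsto_weightExponent_atTop hn hNn
  have hratio := ((tendsto_add_const_div_self (1 / 2)).comp hc).sqrt.inv₀
    (by rw [Real.sqrt_one]; exact one_ne_zero)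
  rw [Real.sqrt_one, inv_one] at hratio
  have hlim := ((Complex.continuous_ofReal.tendsto _).comp hratio).mul (hz.const_mul 2)
  rw [Complex.ofReal_one, one_mul] at hlim
  refine hlim.congr' ?_
  filter_upwards [hN.eventually_gt_atTop 0, hc.eventually_gt_atTop 0] with i hNi hci
  rw [sc_one hNi, show n i + (n i - N i) = weightExponent (N i) (n i) + 1 / 2 by
      rw [weightExponent]; ring,
    Function.comp_apply, Function.comp_apply, Real.sqrt_div' _ hci.le]
  push_cast
  rw [inv_div]
  field_simp

theorem tendsto_resc [l.IsCountablyGenerated] (hN : Tendsto N l atTop) (hn : Tendsto n l atTop)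
    (hNn : Tendsto (fun i => N i / √(n i)) l (𝓝 ρ)) {z w : ι → ℂ} {z₀ w₀ : ℂ}
    (hz : Tendsto z l (𝓝 z₀)) (hw : Tendsto w l (𝓝 w₀)) :
    Tendsto (fun i => resc (N i) (n i) (n i - N i) 1 (z i) (w i)) l
      (𝓝 (Complex.exp (-z₀ ^ 2 - w₀ ^ 2) * kweak ρ z₀ w₀)) := by
  have hc := tendsto_weightExponent_atTop hn hNn
  have hNc := tendsto_div_sqrt_weightExponent hn hNn
  have hh := tendsto_sqrt_mul_div_sc hN hn hNn hz
  have hk := tendsto_sqrt_mul_div_sc hN hn hNn hw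
  have hpre := (Complex.continuous_ofReal.tendsto _).comp (tendsto_prefactor.comp hc)
  have hlim := hpre.mul ((tendsto_orderedSum_latticeRow hN hc hNc hh hk (3 / 4) (1 / 4)).sub
    (tendsto_orderedSum_latticeRow hN hc hNc hk hh (3 / 4) (1 / 4)))
  rw [← exp_mul_kweak] at hlim
  refine hlim.congr' ?_
  have hsmall {f : ι → ℂ} (hf : Tendsto f l (𝓝 0)) : ∀ᶠ i in l, ‖f i‖ < 1 / 2 :=
    hf.norm.eventually_lt_const (by rw [norm_zero]; exact one_half_pos)
  filter_upwards [hsmall (tendsto_zero_of_sqrt_mul hc hh), hsmall (tendsto_zero_of_sqrt_mul hc hk),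
    hN.eventually_gt_atTop 0, hc.eventually_gt_atTop 0] with i hhi hki hNi hci
  rw [resc_one_eq hNi rfl (by positivity) hhi hki rfl rfl]
  rfl

end Limit

lemma tendstoLocallyUniformly_of_forall_tendsto_prod {ι X Y : Type*} [TopologicalSpace X]
    [UniformSpace Y] {l : Filter ι} {F : ι → X → Y} {f : X → Y} (hf : Continuous f)
    (hF : ∀ x, Tendsto (fun y : ι × X => F y.1 y.2) (l ×ˢ 𝓝 x) (𝓝 (f x))) :
    TendstoLocallyUniformly F f l := by
  refine tendstoLocallyUniformly_iff_forall_tendsto.2 fun x => ?_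
  exact (((hf.tendsto x).comp tendsto_snd).prodMk_nhds (hF x)).mono_right (nhds_le_uniformity _)

lemma continuous_exp_mul_kweak (ρ : ℝ) :
    Continuous fun q : ℂ × ℂ => Complex.exp (-q.1 ^ 2 - q.2 ^ 2) * kweak ρ q.1 q.2 := by
  simp only [exp_mul_kweak]
  have hcont := continuous_orderedIntegral (ρ / (2 * √2))
  have hswap := hcont.comp (continuous_swap (X := ℂ) (Y := ℂ))
  exact continuous_const.mul (hcont.sub hswap)

theorem kernel_convergence_weak_general {ι : Type*} {l : Filter ι} [l.IsCountablyGenerated]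
    {N : ι → ℕ} {n : ι → ℝ} {ρ : ℝ} (hN : Tendsto N l atTop) (hn : Tendsto n l atTop)
    (hNn : Tendsto (fun i => N i / √(n i)) l (𝓝 ρ)) :
    TendstoLocallyUniformly
      (fun (i : ι) (q : ℂ × ℂ) => resc (N i) (n i) (n i - N i) 1 q.1 q.2)
      (fun q => Complex.exp (-q.1 ^ 2 - q.2 ^ 2) * kweak ρ q.1 q.2) l := by
  refine tendstoLocallyUniformly_of_forall_tendsto_prod (continuous_exp_mul_kweak ρ) fun q => ?_
  have hz : Tendsto (fun y : ι × ℂ × ℂ => y.2.1) (l ×ˢ 𝓝 q) (𝓝 q.1) :=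
    (continuous_fst.tendsto q).comp tendsto_snd
  have hw : Tendsto (fun y : ι × ℂ × ℂ => y.2.2) (l ×ˢ 𝓝 q) (𝓝 q.2) :=
    (continuous_snd.tendsto q).comp tendsto_snd
  exact tendsto_resc (hN.comp tendsto_fst) (hn.comp tendsto_fst) (hNn.comp tendsto_fst) hz hw

lemma tendsto_sq_div_sq_atTop {ρ : ℝ} (hρ : ρ ≠ 0) :
    Tendsto (fun N : ℕ => (N : ℝ) ^ 2 / ρ ^ 2) atTop atTop :=
  ((tendsto_pow_atTop two_ne_zero).comp tendsto_natCast_atTop_atTop).atTop_div_const (by positivity)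

lemma tendsto_div_sqrt_sq_div_sq {ρ : ℝ} (hρ : 0 < ρ) :
    Tendsto (fun N : ℕ => N / √((N : ℝ) ^ 2 / ρ ^ 2)) atTop (𝓝 ρ) := by
  refine tendsto_const_nhds.congr' ?_
  filter_upwards [eventually_gt_atTop 0] with N hN
  rw [Real.sqrt_div' _ (sq_nonneg ρ), Real.sqrt_sq N.cast_nonneg, Real.sqrt_sq hρ.le,
    div_div_cancel₀ (by positivity)]

/-- equation (2.15), case (b): kernel convergence in the weak
non-unitarity regime (zooming point `p = 1`). -/
theorem kernel_convergence_weak (ρ : ℝ) (hρ : 0 < ρ) (K : Set (ℂ × ℂ)) (hK : IsCompact K) :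
    TendstoUniformlyOn
      (fun (N : ℕ) (q : ℂ × ℂ) => resc N ((N:ℝ)^2/ρ^2) ((N:ℝ)^2/ρ^2 - N) 1 q.1 q.2)
      (fun q => Complex.exp (-q.1^2-q.2^2) * kweak ρ q.1 q.2)
      (atTop ⊓ 𝓟 (Sweak ρ)) K :=
  (tendstoLocallyUniformlyOn_iff_tendstoUniformlyOn_of_compact hK).1
    (kernel_convergence_weak_general (tendsto_id.mono_left inf_le_left)
      ((tendsto_sq_div_sq_atTop hρ.ne').mono_left inf_le_left)
      ((tendsto_div_sqrt_sq_div_sq hρ).mono_left inf_le_left)).tendstoLocallyUniformlyOn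

end SI
end
end

section
/- Kernel convergence at the singular origin (equation (2.15), case (c)). Under the singular-origin setup with 2L a positive integer and zooming point p = 0, as N → ∞ the rescaled kernel κ̃_N(z,w) converges to e^{−z²−w²} κ_o(z,w) uniformly for (z,w) in compact subsets of ℂ × ℂ. -/
open MeasureTheory Filter Finset

noncomputable section

namespace SI

/-- The two-parametric Mittag-Leffler function `E_{2,1+M}` with `M = 2L ∈ ℕ`. -/
def MLE (M : ℕ) (x : ℂ) : ℂ := ∑' k : ℕ, x ^ k / Complex.Gamma ((2*k+1+M : ℕ) : ℂ)

/-- The limiting kernel `κ_o` at the singular origin, with `M = 2L`. -/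
def ko (M : ℕ) (z w : ℂ) : ℂ :=
  2 * (2*z*w) ^ M * ∫ s in (0:ℝ)..1, (s:ℂ) ^ M *
    (z * Complex.exp ((1-(s:ℂ)^2)*z^2) - w * Complex.exp ((1-(s:ℂ)^2)*w^2)) *
    MLE M ((2*(s:ℂ)*z*w)^2)

/-- The admissible system sizes in the singular-origin regime:
positive `N` for which `n = (b+1)N` is an integer. -/
def Ssing (b : ℝ) : Set ℕ :=
  {N | 0 < N ∧ ∃ nm : ℕ, (nm : ℝ) = (b+1)*N}

/-!
With `m = n + L` and `M = 2L`, both the rescaled finite kernel (up to its weight) and `κ_o` are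
double series in the skew-symmetrizations of `z ^ (2k + M + 1) * w ^ (2l + M)`, `l ≤ k`. The
duplication formula turns each finite coefficient into the limiting one times two ratios
`Γ(m + s) / (Γ(m + t) * m ^ (s - t))`, and these tend to `1`; a Beta integral identifies the limit
with the coefficients of `κ_o`. Log-convexity of `Γ` bounds the ratios by `3 ^ (s - t)`, so all
coefficients are dominated by those of an entire function and dominated convergence applies along
`z → z₀`, `w → w₀`, `N → ∞` jointly. The weight is `(1 + (z² + w² + z²w²/m) / m) ^ (-(m - 1/2))`,
which tends to `exp (-z² - w²)` in the same sense. Such joint convergence to a continuous limit is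
locally uniform convergence.
-/

section GammaFunction

lemma Gamma_add_le_Gamma_mul_rpow {x a : ℝ} (hx : 0 < x) (ha : 0 ≤ a) :
    Real.Gamma (x + a) ≤ Real.Gamma x * (x + a) ^ a := by
  rcases ha.eq_or_lt with rfl | ha
  · simp
  have hΓx := Real.Gamma_pos_of_pos hx
  have hΓxa := Real.Gamma_pos_of_pos (add_pos hx ha)
  have hslope := Real.convexOn_log_Gamma.slope_mono_adjacent (x := x) (y := x + a) (z := x + a + 1)
    hx (by simp only [Set.mem_Ioi]; positivity) (by linarith) (by linarith)
  simp only [Function.comp_apply, add_sub_cancel_left, div_one] at hslope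
  rw [div_le_iff₀ ha, Real.Gamma_add_one (by positivity),
    Real.log_mul (by positivity) hΓxa.ne'] at hslope
  rw [← Real.log_le_log_iff hΓxa (by positivity), Real.log_mul hΓx.ne' (by positivity),
    Real.log_rpow (by positivity)]
  linarith

lemma Gamma_mul_sub_one_rpow_le_Gamma_add {x a : ℝ} (hx : 1 < x) (ha : 0 ≤ a) :
    Real.Gamma x * (x - 1) ^ a ≤ Real.Gamma (x + a) := by
  rcases ha.eq_or_lt with rfl | ha
  · simp
  have hx1 : 0 < x - 1 := by linarith
  have hΓx1 := Real.Gamma_pos_of_pos hx1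
  have hΓx := Real.Gamma_pos_of_pos (zero_lt_one.trans hx)
  have hΓxa := Real.Gamma_pos_of_pos (show 0 < x + a by linarith)
  have hlog : Real.log (Real.Gamma x) = Real.log (x - 1) + Real.log (Real.Gamma (x - 1)) := by
    rw [← Real.log_mul hx1.ne' hΓx1.ne', ← Real.Gamma_add_one hx1.ne', sub_add_cancel]
  have hslope := Real.convexOn_log_Gamma.slope_mono_adjacent (x := x - 1) (y := x) (z := x + a)
    hx1 (by simp only [Set.mem_Ioi]; linarith) (by linarith) (by linarith)
  simp only [Function.comp_apply, add_sub_cancel_left, sub_sub_cancel, div_one] at hslope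
  rw [le_div_iff₀ ha, hlog, add_sub_cancel_right] at hslope
  rw [← Real.log_le_log_iff (by positivity) hΓxa, Real.log_mul hΓx.ne' (by positivity),
    Real.log_rpow hx1]
  linarith

/-- The ratio `Γ(x + s) / Γ(x + t)` divided by its asymptotic value `x ^ (s - t)` as `x → ∞`. -/
def gammaQuotient (s t x : ℝ) : ℝ := Real.Gamma (x + s) / (Real.Gamma (x + t) * x ^ (s - t))

lemma gammaQuotient_nonneg {s t x : ℝ} (hx : 0 ≤ x) (hxs : 0 < x + s) (hxt : 0 < x + t) :
    0 ≤ gammaQuotient s t x := by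
  have := Real.Gamma_pos_of_pos hxs
  have := Real.Gamma_pos_of_pos hxt
  unfold gammaQuotient
  positivity

lemma gammaQuotient_le {s t x : ℝ} (hst : t ≤ s) (hx : 0 < x) (hxt : 0 < x + t) :
    gammaQuotient s t x ≤ ((x + s) / x) ^ (s - t) := by
  have hΓ := Real.Gamma_pos_of_pos hxt
  have h := Gamma_add_le_Gamma_mul_rpow hxt (sub_nonneg.2 hst)
  rw [add_add_sub_cancel] at h
  unfold gammaQuotient
  rw [Real.div_rpow (by linarith) hx.le, ← div_div]
  gcongr
  rwa [div_le_iff₀' hΓ]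

lemma gammaQuotient_le_rpow_of_add_le_mul {s t x C : ℝ} (hst : t ≤ s) (hx : 0 < x)
    (hxt : 0 < x + t) (hC : x + s ≤ C * x) : gammaQuotient s t x ≤ C ^ (s - t) :=
  (gammaQuotient_le hst hx hxt).trans <|
    Real.rpow_le_rpow (div_nonneg (by linarith) hx.le) ((div_le_iff₀ hx).2 hC) (sub_nonneg.2 hst)

lemma le_gammaQuotient {s t x : ℝ} (hst : t ≤ s) (hx : 0 < x) (hxt : 1 < x + t) :
    ((x + t - 1) / x) ^ (s - t) ≤ gammaQuotient s t x := by
  have hΓ := Real.Gamma_pos_of_pos (zero_lt_one.trans hxt)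
  have h := Gamma_mul_sub_one_rpow_le_Gamma_add hxt (sub_nonneg.2 hst)
  rw [add_add_sub_cancel] at h
  unfold gammaQuotient
  rw [Real.div_rpow (by linarith) hx.le, ← div_div]
  gcongr
  rwa [le_div_iff₀' hΓ]

lemma tendsto_gammaQuotient {s t : ℝ} (hst : t ≤ s) :
    Tendsto (gammaQuotient s t) atTop (nhds 1) := by
  have hpow (d : ℝ) : Tendsto (fun x : ℝ => ((x + d) / x) ^ (s - t)) atTop (nhds 1) := by
    have h : Tendsto (fun x : ℝ => 1 + d / x) atTop (nhds 1) := by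
      simpa using (tendsto_const_nhds (x := d)).div_atTop tendsto_id |>.const_add 1
    have h' : Tendsto (fun x : ℝ => (x + d) / x) atTop (nhds 1) := by
      refine h.congr' ?_
      filter_upwards [eventually_ne_atTop 0] with x hx
      rw [add_div, div_self hx]
    simpa using h'.rpow_const (Or.inr (sub_nonneg.2 hst))
  refine tendsto_of_tendsto_of_tendsto_of_le_of_le' (hpow (t - 1)) (hpow s) ?_ ?_ <;>
    filter_upwards [eventually_gt_atTop 0, eventually_gt_atTop (1 - t)] with x hx hxt
  · simpa only [add_sub_assoc] using le_gammaQuotient hst hx (by linarith)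
  · exact gammaQuotient_le hst hx (by linarith)

lemma pi_mul_Gamma_div_two_rpow (x : ℝ) :
    Real.pi * Real.Gamma (2 * x + 2) / 2 ^ (2 * x + 1) =
      √Real.pi * (Real.Gamma (x + 1) * Real.Gamma (x + 3 / 2)) := by
  have h := Real.Gamma_mul_Gamma_add_half (x + 1)
  rw [show x + 1 + 1 / 2 = x + 3 / 2 by ring, show 2 * (x + 1) = 2 * x + 2 by ring,
    show 1 - (2 * x + 2) = -(2 * x + 1) by ring, Real.rpow_neg zero_le_two] at h
  rw [h, div_eq_mul_inv]
  linear_combination -(Real.Gamma (2 * x + 2) * (2 ^ (2 * x + 1))⁻¹) *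
    Real.mul_self_sqrt Real.pi_pos.le

lemma integral_rpow_mul_one_sub_sq_rpow {u v : ℝ} (hu : 0 < u) (hv : 0 < v) :
    ∫ s in (0 : ℝ)..1, s ^ (2 * u - 1) * (1 - s ^ 2) ^ (v - 1) =
      ProbabilityTheory.beta u v / 2 := by
  have hbeta : ProbabilityTheory.beta u v =
      ∫ y in (0 : ℝ)..1, y ^ (u - 1) * (1 - y) ^ (v - 1) := by
    rw [ProbabilityTheory.beta_eq_betaIntegralReal u v hu hv, Complex.betaIntegral,
      ← Complex.ofReal_re (∫ y in (0 : ℝ)..1, y ^ (u - 1) * (1 - y) ^ (v - 1)),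
      ← intervalIntegral.integral_ofReal]
    congr 1
    refine intervalIntegral.integral_congr fun y hy => ?_
    rw [Set.uIcc_of_le zero_le_one] at hy
    push_cast [Complex.ofReal_cpow hy.1, Complex.ofReal_cpow (sub_nonneg.2 hy.2)]
    rfl
  have hsubst := intervalIntegral.integral_comp_mul_deriv_of_deriv_nonneg (a := 0) (b := 1)
    (f := fun s : ℝ => s ^ 2) (f' := fun s => 2 * s)
    (g := fun y : ℝ => y ^ (u - 1) * (1 - y) ^ (v - 1)) (by fun_prop)
    (fun s _ => by simpa using hasDerivAt_pow 2 s)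
    (fun s hs => by rw [min_eq_left zero_le_one] at hs; linarith [hs.1])
  norm_num only at hsubst
  rw [hbeta, ← hsubst, ← intervalIntegral.integral_div]
  refine intervalIntegral.integral_congr_ae (Eventually.of_forall fun s hs => ?_)
  rw [Set.uIoc_of_le zero_le_one] at hs
  have hpow : s ^ (2 * u - 1) = (s ^ 2) ^ (u - 1) * s := by
    rw [← Real.rpow_natCast, ← Real.rpow_mul hs.1.le, ← Real.rpow_add_one hs.1.ne']
    congr 1
    push_cast
    ring
  simp only [Function.comp_apply]
  rw [hpow]
  ring

lemma integral_pow_mul_one_sub_sq_pow (a i : ℕ) :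
    ∫ s in (0 : ℝ)..1, s ^ a * (1 - s ^ 2) ^ i =
      ProbabilityTheory.beta ((a + 1) / 2) (i + 1) / 2 := by
  rw [← integral_rpow_mul_one_sub_sq_rpow (by positivity) (by positivity)]
  refine intervalIntegral.integral_congr fun s _ => ?_
  simp only [← Real.rpow_natCast, add_sub_cancel_right]
  congr 2
  ring

lemma norm_pow_mul_one_sub_sq_pow_le_one {s : ℝ} (hs : s ∈ Set.uIoc 0 1) (a i : ℕ) :
    ‖s ^ a * (1 - s ^ 2) ^ i‖ ≤ 1 := by
  rw [Set.uIoc_of_le zero_le_one] at hs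
  have hs2 : s ^ 2 ≤ 1 := pow_le_one₀ hs.1.le hs.2
  rw [Real.norm_of_nonneg (by have := hs.1; have := sub_nonneg.2 hs2; positivity)]
  exact mul_le_one₀ (pow_le_one₀ hs.1.le hs.2) (pow_nonneg (sub_nonneg.2 hs2) _)
    (pow_le_one₀ (sub_nonneg.2 hs2) (sub_le_self _ (sq_nonneg s)))

end GammaFunction

section SkewSeries

/-- The skew-symmetrization of `z ^ (2 * k + M + 1) * w ^ (2 * l + M)` for `k ≥ l`, indexed by
`p = (k - l, l)`; both the finite-size and the limiting kernels are series in these. -/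
def skewMonomial (M : ℕ) (p : ℕ × ℕ) (z w : ℂ) : ℂ :=
  (z * w) ^ (2 * p.2 + M) * (z ^ (2 * p.1 + 1) - w ^ (2 * p.1 + 1))

/-- The skew-symmetric double power series with real coefficients `c`; by the convention for `∑'`
it is `0` where it does not converge. -/
def skewSeries (M : ℕ) (c : ℕ × ℕ → ℝ) (z w : ℂ) : ℂ := ∑' p, (c p : ℂ) * skewMonomial M p z w

lemma skewMonomial_mul_left (M : ℕ) (p : ℕ × ℕ) (r z w : ℂ) :
    skewMonomial M p (r * z) (r * w) =
      r ^ (2 * (p.1 + 2 * p.2 + M) + 1) * skewMonomial M p z w := by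
  simp only [skewMonomial]
  ring

lemma norm_skewMonomial_le {M : ℕ} {p : ℕ × ℕ} {R : ℝ} {z w : ℂ} (hz : ‖z‖ ≤ R) (hw : ‖w‖ ≤ R) :
    ‖skewMonomial M p z w‖ ≤ 2 * R ^ (2 * M + 1) * (R ^ 2) ^ p.1 * (R ^ 4) ^ p.2 := by
  have hR : 0 ≤ R := (norm_nonneg z).trans hz
  calc ‖skewMonomial M p z w‖
      ≤ (‖z‖ * ‖w‖) ^ (2 * p.2 + M) * (‖z‖ ^ (2 * p.1 + 1) + ‖w‖ ^ (2 * p.1 + 1)) := by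
        rw [skewMonomial, norm_mul, norm_pow, norm_mul, ← norm_pow, ← norm_pow]
        gcongr
        exact norm_sub_le _ _
    _ ≤ (R * R) ^ (2 * p.2 + M) * (R ^ (2 * p.1 + 1) + R ^ (2 * p.1 + 1)) := by gcongr
    _ = 2 * R ^ (2 * M + 1) * (R ^ 2) ^ p.1 * (R ^ 4) ^ p.2 := by ring

lemma summable_pow_mul_pow_div_factorial (x y : ℝ) :
    Summable fun p : ℕ × ℕ => x ^ p.1 * y ^ p.2 / (p.1.factorial * p.2.factorial) := by
  have h := summable_mul_of_summable_norm (Real.summable_pow_div_factorial x).norm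
    (Real.summable_pow_div_factorial y).norm
  exact h.congr fun p => div_mul_div_comm ..

lemma tendsto_skewSeries {α : Type*} {l : Filter α} {M : ℕ} {c : α → ℕ × ℕ → ℝ} {c₀ : ℕ × ℕ → ℝ}
    {z w : α → ℂ} {z₀ w₀ : ℂ} {A B C : ℝ} (hz : Tendsto z l (nhds z₀)) (hw : Tendsto w l (nhds w₀))
    (hc : ∀ p, Tendsto (c · p) l (nhds (c₀ p)))
    (hbound : ∀ᶠ x in l, ∀ p : ℕ × ℕ,
      |c x p| ≤ A * (B ^ p.1 * C ^ p.2 / (p.1.factorial * p.2.factorial))) :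
    Tendsto (fun x => skewSeries M (c x) (z x) (w x)) l (nhds (skewSeries M c₀ z₀ w₀)) := by
  set R := max (‖z₀‖ + 1) (‖w₀‖ + 1)
  have hzR : ∀ᶠ x in l, ‖z x‖ < R := hz.norm.eventually_lt_const (lt_max_of_lt_left (lt_add_one _))
  have hwR : ∀ᶠ x in l, ‖w x‖ < R := hw.norm.eventually_lt_const (lt_max_of_lt_right (lt_add_one _))
  refine tendsto_tsum_of_dominated_convergence (bound := fun p =>
    2 * A * R ^ (2 * M + 1) *
      ((B * R ^ 2) ^ p.1 * (C * R ^ 4) ^ p.2 / (p.1.factorial * p.2.factorial)))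
    ((summable_pow_mul_pow_div_factorial _ _).mul_left _) (fun p => ?_) ?_
  · exact ((Complex.continuous_ofReal.tendsto _).comp (hc p)).mul
      (((hz.mul hw).pow _).mul ((hz.pow _).sub (hw.pow _)))
  · filter_upwards [hbound, hzR, hwR] with x hcx hzx hwx p
    rw [norm_mul, Complex.norm_real, Real.norm_eq_abs]
    refine (mul_le_mul (hcx p) (norm_skewMonomial_le hzx.le hwx.le) (norm_nonneg _)
      ((abs_nonneg _).trans (hcx p))).trans_eq ?_
    ring

end SkewSeries

section LimitingKernel

/-- The coefficient of `skewMonomial M p` in the limiting kernel at the origin. -/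
def originCoeff (M : ℕ) (p : ℕ × ℕ) : ℝ :=
  √Real.pi / (Real.Gamma (p.1 + p.2 + M / 2 + 3 / 2) * Real.Gamma (p.2 + M / 2 + 1))

lemma originCoeff_nonneg (M : ℕ) (p : ℕ × ℕ) : 0 ≤ originCoeff M p := by
  have := Real.Gamma_pos_of_pos (show (0 : ℝ) < p.1 + p.2 + M / 2 + 3 / 2 by positivity)
  have := Real.Gamma_pos_of_pos (show (0 : ℝ) < p.2 + M / 2 + 1 by positivity)
  unfold originCoeff
  positivity

lemma originCoeff_eq_mul_integral (M : ℕ) (p : ℕ × ℕ) :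
    originCoeff M p = 2 ^ (2 * p.2 + M + 1) / (p.1.factorial * (2 * p.2 + M).factorial) *
      ∫ s in (0 : ℝ)..1, s ^ (2 * p.2 + M) * (1 - s ^ 2) ^ p.1 := by
  obtain ⟨i, j⟩ := p
  set u : ℝ := ((2 * j + M : ℕ) + 1) / 2 with hu
  have hupos : 0 < u := by positivity
  have hdup := Real.Gamma_mul_Gamma_add_half u
  rw [show 2 * u = (2 * j + M : ℕ) + 1 by rw [hu]; ring, Real.Gamma_nat_eq_factorial,
    sub_add_cancel_right, Real.rpow_neg zero_le_two, Real.rpow_natCast] at hdup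
  have := Real.Gamma_pos_of_pos hupos
  have := Real.Gamma_pos_of_pos (show 0 < u + 1 / 2 by positivity)
  have := Real.Gamma_pos_of_pos (show 0 < u + (i + 1) by positivity)
  have hi : (i : ℝ) + j + M / 2 + 3 / 2 = u + (i + 1) := by rw [hu]; push_cast; ring
  have hj : (j : ℝ) + M / 2 + 1 = u + 1 / 2 := by rw [hu]; push_cast; ring
  rw [integral_pow_mul_one_sub_sq_pow, ← hu, ProbabilityTheory.beta, Real.Gamma_nat_eq_factorial,
    originCoeff, hi, hj]
  field_simp
  field_simp at hdup
  linear_combination (-2) * hdup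

lemma originCoeff_le (M : ℕ) (p : ℕ × ℕ) :
    originCoeff M p ≤
      2 ^ (M + 1) * (1 ^ p.1 * 4 ^ p.2 / (p.1.factorial * p.2.factorial)) := by
  have hint : ∫ s in (0 : ℝ)..1, s ^ (2 * p.2 + M) * (1 - s ^ 2) ^ p.1 ≤ 1 := by
    refine (le_abs_self _).trans ?_
    simpa using intervalIntegral.norm_integral_le_of_norm_le_const
      (f := fun s : ℝ => s ^ (2 * p.2 + M) * (1 - s ^ 2) ^ p.1) (C := 1)
      fun s hs => norm_pow_mul_one_sub_sq_pow_le_one hs _ _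
  have hfac : (p.2.factorial : ℝ) ≤ (2 * p.2 + M).factorial := by
    exact_mod_cast Nat.factorial_le (by lia)
  calc originCoeff M p
      ≤ 2 ^ (2 * p.2 + M + 1) / (p.1.factorial * p.2.factorial) * 1 := by
        rw [originCoeff_eq_mul_integral]
        refine (mul_le_mul_of_nonneg_left hint (by positivity)).trans ?_
        gcongr
    _ = 2 ^ (M + 1) * (1 ^ p.1 * 4 ^ p.2 / (p.1.factorial * p.2.factorial)) := by
        rw [show (4 : ℝ) = 2 ^ 2 by norm_num, ← pow_mul]
        ring

lemma hasSum_MLE (M : ℕ) (x : ℂ) :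
    HasSum (fun j : ℕ => x ^ j / (2 * j + M).factorial) (MLE M x) := by
  have hΓ (j : ℕ) : Complex.Gamma ((2 * j + 1 + M : ℕ) : ℂ) = (2 * j + M).factorial := by
    rw [show ((2 * j + 1 + M : ℕ) : ℂ) = (2 * j + M : ℕ) + 1 by push_cast; ring,
      Complex.Gamma_nat_eq_factorial]
  simp only [MLE, hΓ]
  refine (Summable.of_norm_bounded (Real.summable_pow_div_factorial ‖x‖) fun j => ?_).hasSum
  rw [norm_div, norm_pow, Complex.norm_natCast]
  gcongr
  lia

lemma hasSum_mul_exp_sub_mul_exp (t z w : ℂ) :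
    HasSum (fun i : ℕ => t ^ i / i.factorial * (z ^ (2 * i + 1) - w ^ (2 * i + 1)))
      (z * Complex.exp (t * z ^ 2) - w * Complex.exp (t * w ^ 2)) := by
  have hexp (u : ℂ) : HasSum (fun i : ℕ => t ^ i / i.factorial * u ^ (2 * i + 1))
      (u * Complex.exp (t * u ^ 2)) := by
    rw [Complex.exp_eq_exp_ℂ]
    exact ((NormedSpace.expSeries_div_hasSum_exp (t * u ^ 2)).mul_left u).congr_fun
      fun i => by ring
  simpa only [mul_sub] using (hexp z).sub (hexp w)

/-- The factor independent of `s` in the `(i, j)`-th term of the expansion of the integrand of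
`ko M z w` in powers of `s` and `1 - s ^ 2`. -/
def koTerm (M : ℕ) (z w : ℂ) (p : ℕ × ℕ) : ℂ :=
  (2 * z * w) ^ (2 * p.2) / (p.1.factorial * (2 * p.2 + M).factorial) *
    (z ^ (2 * p.1 + 1) - w ^ (2 * p.1 + 1))

lemma summable_norm_koTerm (M : ℕ) (z w : ℂ) : Summable fun p => ‖koTerm M z w p‖ := by
  have hexp := (hasSum_mul_exp_sub_mul_exp 1 z w).summable.norm
  have hMLE := (hasSum_MLE M ((2 * z * w) ^ 2)).summable.norm
  refine (summable_mul_of_summable_norm hexp hMLE).norm.congr fun p => ?_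
  rw [koTerm, one_pow, ← pow_mul]
  congr 1
  ring

lemma hasSum_ko_integrand (M : ℕ) (z w : ℂ) (s : ℝ) :
    HasSum (fun p : ℕ × ℕ => ((s ^ (2 * p.2 + M) * (1 - s ^ 2) ^ p.1 : ℝ) : ℂ) * koTerm M z w p)
      ((s : ℂ) ^ M *
        (z * Complex.exp ((1 - (s : ℂ) ^ 2) * z ^ 2) -
          w * Complex.exp ((1 - (s : ℂ) ^ 2) * w ^ 2)) *
        MLE M ((2 * (s : ℂ) * z * w) ^ 2)) := by
  have hexp := hasSum_mul_exp_sub_mul_exp (1 - (s : ℂ) ^ 2) z w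
  have hMLE := hasSum_MLE M ((2 * (s : ℂ) * z * w) ^ 2)
  have hsummable := summable_mul_of_summable_norm hexp.summable.norm hMLE.summable.norm
  rw [mul_assoc ((s : ℂ) ^ M)]
  refine ((hexp.mul hMLE hsummable).mul_left ((s : ℂ) ^ M)).congr_fun fun p => ?_
  push_cast [koTerm]
  rw [← pow_mul _ 2]
  ring

lemma ko_eq_skewSeries (M : ℕ) (z w : ℂ) : ko M z w = skewSeries M (originCoeff M) z w := by
  have hint := intervalIntegral.hasSum_integral_of_dominated_convergence
    (μ := volume) (a := 0) (b := 1)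
    (F := fun p (s : ℝ) => ((s ^ (2 * p.2 + M) * (1 - s ^ 2) ^ p.1 : ℝ) : ℂ) * koTerm M z w p)
    (fun p _ => ‖koTerm M z w p‖)
    (fun p => Continuous.aestronglyMeasurable (by fun_prop))
    (fun p => Eventually.of_forall fun s hs => by
      rw [norm_mul, Complex.norm_real]
      exact mul_le_of_le_one_left (norm_nonneg _) (norm_pow_mul_one_sub_sq_pow_le_one hs _ _))
    (Eventually.of_forall fun _ _ => summable_norm_koTerm M z w)
    intervalIntegrable_const
    (Eventually.of_forall fun s _ => hasSum_ko_integrand M z w s)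
  rw [ko, ← hint.tsum_eq, ← tsum_mul_left, skewSeries]
  refine tsum_congr fun p => ?_
  rw [intervalIntegral.integral_mul_const, intervalIntegral.integral_ofReal,
    originCoeff_eq_mul_integral, koTerm, skewMonomial]
  push_cast
  ring

lemma continuous_ko (M : ℕ) : Continuous fun q : ℂ × ℂ => ko M q.1 q.2 := by
  simp only [ko_eq_skewSeries]
  refine continuous_iff_continuousAt.2 fun q => tendsto_skewSeries (continuous_fst.tendsto q)
    (continuous_snd.tendsto q) (fun _ => tendsto_const_nhds) (Eventually.of_forall fun _ p =>
      (abs_of_nonneg (originCoeff_nonneg M p)).trans_le (originCoeff_le M p))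

end LimitingKernel

section FiniteKernel

lemma sum_range_sum_range_succ_eq_tsum {E : Type*} [AddCommMonoid E] [TopologicalSpace E] (N : ℕ)
    (f : ℕ → ℕ → E) :
    ∑ k ∈ range N, ∑ l ∈ range (k + 1), f k l =
      ∑' p : ℕ × ℕ, if p.1 + p.2 < N then f (p.1 + p.2) p.2 else 0 := by
  have hsupport (p : ℕ × ℕ) (hp : p ∉ range N ×ˢ range N) :
      (if p.1 + p.2 < N then f (p.1 + p.2) p.2 else 0) = 0 :=
    if_neg fun h => hp (by simp only [mem_product, mem_range]; lia)
  rw [sum_sigma', tsum_eq_sum hsupport, ← sum_filter]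
  refine sum_bij' (fun x _ => (x.1 - x.2, x.2)) (fun p _ => ⟨p.1 + p.2, p.2⟩) ?_ ?_ ?_ ?_ ?_
  · rintro ⟨k, l⟩ hx
    simp only [mem_sigma, mem_filter, mem_product, mem_range] at hx ⊢
    lia
  · rintro ⟨i, j⟩ hp
    simp only [mem_sigma, mem_filter, mem_product, mem_range] at hp ⊢
    lia
  · rintro ⟨k, l⟩ hx
    simp only [mem_sigma, mem_range] at hx
    simp only [Nat.sub_add_cancel (show l ≤ k by lia)]
  · rintro ⟨i, j⟩ -
    simp only [add_tsub_cancel_right]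
  · rintro ⟨k, l⟩ hx
    simp only [mem_sigma, mem_range] at hx
    simp only [Nat.sub_add_cancel (show l ≤ k by lia)]

/-- The coefficient of `ζ ^ (2 * k + M + 1) * η ^ (2 * l + M)` in `GK N n (M / 2) ζ η`. -/
def kernelCoeff (n : ℝ) (M k l : ℕ) : ℝ :=
  Real.pi * Real.Gamma (2 * n + M + 2) / 2 ^ (2 * n + M + 1) /
    (Real.Gamma (k + M / 2 + 3 / 2) * Real.Gamma (n - k) * Real.Gamma (n - l + 1 / 2) *
      Real.Gamma (l + M / 2 + 1))

lemma GK_eq_sum (N : ℕ) (n : ℝ) (M : ℕ) (ζ η : ℂ) :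
    GK N n (M / 2) ζ η = ∑ k ∈ range N, ∑ l ∈ range (k + 1),
      (kernelCoeff n M k l : ℂ) * (ζ ^ (2 * k + M + 1) * η ^ (2 * l + M)) := by
  have hk (k : ℕ) : ζ ^ ((2 * k + 2 * (M / 2) + 1 : ℝ) : ℂ) = ζ ^ (2 * k + M + 1) := by
    rw [← Complex.cpow_natCast]
    push_cast
    ring_nf
  have hl (l : ℕ) : η ^ ((2 * l + 2 * (M / 2) : ℝ) : ℂ) = η ^ (2 * l + M) := by
    rw [← Complex.cpow_natCast]
    push_cast
    ring_nf
  have htwo : (2 : ℂ) ^ ((2 * n + 2 * (M / 2) + 1 : ℝ) : ℂ) = ((2 ^ (2 * n + M + 1) : ℝ) : ℂ) := by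
    rw [mul_div_cancel₀ _ two_ne_zero, Complex.ofReal_cpow zero_le_two, Complex.ofReal_ofNat]
  simp only [GK, mul_sum, hk, hl, htwo, Complex.Gamma_ofReal]
  refine sum_congr rfl fun k _ => sum_congr rfl fun l _ => ?_
  rw [kernelCoeff, mul_div_cancel₀ _ two_ne_zero]
  push_cast
  ring

/-- The coefficient of `skewMonomial M p` in the kernel `KK N n (M / 2)`, without its weight, after
zooming at the origin by `√(n + M / 2)` and dividing by `(n + M / 2) ^ (3 / 2)`. -/
def rescaledCoeff (N : ℕ) (n : ℝ) (M : ℕ) (p : ℕ × ℕ) : ℝ :=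
  if p.1 + p.2 < N then
    kernelCoeff n M (p.1 + p.2) p.2 / (n + M / 2) ^ (p.1 + 2 * p.2 + M + 2)
  else 0

lemma KK_eq_skewSeries (N : ℕ) (n : ℝ) (M : ℕ) (ζ η : ℂ) :
    KK N n (M / 2) ζ η = skewSeries M
      (fun p => if p.1 + p.2 < N then kernelCoeff n M (p.1 + p.2) p.2 else 0) ζ η := by
  simp only [KK, GK_eq_sum, ← sum_sub_distrib]
  rw [sum_range_sum_range_succ_eq_tsum, skewSeries]
  refine tsum_congr fun p => ?_
  split_ifs
  · rw [skewMonomial]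
    ring
  · rw [Complex.ofReal_zero, zero_mul]

lemma rpow_mul_KK_div_sqrt (N : ℕ) {n : ℝ} {M : ℕ} (hn : 0 < n + M / 2) (z w : ℂ) :
    (((n + M / 2) ^ (-(3 / 2) : ℝ) : ℝ) : ℂ) *
        KK N n (M / 2) (z / √(n + M / 2)) (w / √(n + M / 2)) =
      skewSeries M (rescaledCoeff N n M) z w := by
  set m := n + M / 2 with hm
  have hpow (q : ℕ) : m ^ (-(3 / 2) : ℝ) * (√m)⁻¹ ^ (2 * q + 1) = (m ^ (q + 2))⁻¹ := by
    rw [Real.sqrt_eq_rpow, ← Real.rpow_neg hn.le, ← Real.rpow_natCast, ← Real.rpow_natCast,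
      ← Real.rpow_mul hn.le, ← Real.rpow_add hn, ← Real.rpow_neg hn.le]
    congr 1
    push_cast
    ring
  rw [KK_eq_skewSeries, skewSeries, skewSeries, ← tsum_mul_left]
  refine tsum_congr fun p => ?_
  rw [div_eq_inv_mul z, div_eq_inv_mul w, ← Complex.ofReal_inv, skewMonomial_mul_left,
    rescaledCoeff, ← hm]
  split_ifs
  · have := congrArg ((↑) : ℝ → ℂ) (hpow (p.1 + 2 * p.2 + M))
    push_cast at this ⊢
    linear_combination (kernelCoeff n M (p.1 + p.2) p.2 : ℂ) * skewMonomial M p z w * this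
  · simp only [Complex.ofReal_zero, zero_mul, mul_zero]

lemma kernelCoeff_div_pow {n : ℝ} {M : ℕ} (hn : 0 < n + M / 2) (p : ℕ × ℕ) :
    kernelCoeff n M (p.1 + p.2) p.2 / (n + M / 2) ^ (p.1 + 2 * p.2 + M + 2) =
      gammaQuotient 1 (-(M / 2 + (p.1 + p.2))) (n + M / 2) *
        gammaQuotient (3 / 2) (1 / 2 - (M / 2 + p.2)) (n + M / 2) * originCoeff M p := by
  set m := n + M / 2 with hm
  have hpow : m ^ (1 - -(M / 2 + (p.1 + p.2) : ℝ)) * m ^ (3 / 2 - (1 / 2 - (M / 2 + p.2) : ℝ)) =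
      m ^ (p.1 + 2 * p.2 + M + 2) := by
    rw [← Real.rpow_add hn, ← Real.rpow_natCast]
    congr 1
    push_cast
    ring
  have hprefactor := pi_mul_Gamma_div_two_rpow m
  rw [show 2 * m + 2 = 2 * n + M + 2 by rw [hm]; ring,
    show 2 * m + 1 = 2 * n + M + 1 by rw [hm]; ring] at hprefactor
  rw [kernelCoeff, hprefactor, ← hpow, gammaQuotient, gammaQuotient, originCoeff,
    show m + -(M / 2 + (p.1 + p.2) : ℝ) = n - (p.1 + p.2) by rw [hm]; ring,
    show m + (1 / 2 - (M / 2 + p.2) : ℝ) = n - p.2 + 1 / 2 by rw [hm]; ring, Nat.cast_add]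
  ring

lemma abs_rescaledCoeff_le {N : ℕ} {n : ℝ} (hn : N ≤ n) (M : ℕ) (p : ℕ × ℕ) :
    |rescaledCoeff N n M p| ≤
      3 ^ (M + 2) * 2 ^ (M + 1) * (3 ^ p.1 * 36 ^ p.2 / (p.1.factorial * p.2.factorial)) := by
  rw [rescaledCoeff]
  split_ifs with hp
  swap
  · rw [abs_zero]
    positivity
  have hpn : (p.1 : ℝ) + p.2 + 1 ≤ n := le_trans (by exact_mod_cast hp) hn
  have : (0 : ℝ) ≤ p.1 := Nat.cast_nonneg _
  have : (0 : ℝ) ≤ p.2 := Nat.cast_nonneg _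
  have : (0 : ℝ) ≤ M := Nat.cast_nonneg _
  rw [kernelCoeff_div_pow (by linarith)]
  set m := n + M / 2 with hm
  have : 1 ≤ m := by linarith
  have hQ₁ : 0 ≤ gammaQuotient 1 (-(M / 2 + (p.1 + p.2))) m :=
    gammaQuotient_nonneg (by linarith) (by linarith) (by linarith)
  have hQ₂ : 0 ≤ gammaQuotient (3 / 2) (1 / 2 - (M / 2 + p.2)) m :=
    gammaQuotient_nonneg (by linarith) (by linarith) (by linarith)
  rw [abs_of_nonneg (mul_nonneg (mul_nonneg hQ₁ hQ₂) (originCoeff_nonneg M p))]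
  calc _ ≤ (3 : ℝ) ^ (1 - -(M / 2 + (p.1 + p.2) : ℝ)) *
        3 ^ (3 / 2 - (1 / 2 - (M / 2 + p.2) : ℝ)) *
        (2 ^ (M + 1) * (1 ^ p.1 * 4 ^ p.2 / (p.1.factorial * p.2.factorial))) := by
        gcongr
        · exact originCoeff_nonneg M p
        · apply gammaQuotient_le_rpow_of_add_le_mul <;> linarith
        · apply gammaQuotient_le_rpow_of_add_le_mul <;> linarith
        · exact originCoeff_le M p
    _ = 3 ^ (M + 2 + p.1 + 2 * p.2) *
        (2 ^ (M + 1) * (1 ^ p.1 * 4 ^ p.2 / (p.1.factorial * p.2.factorial))) := by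
        rw [← Real.rpow_add three_pos, ← Real.rpow_natCast 3]
        congr 2
        push_cast
        ring
    _ = _ := by
        rw [pow_add, pow_mul, one_pow, show (36 : ℝ) = 3 ^ 2 * 4 by norm_num, mul_pow]
        ring

lemma tendsto_rescaledCoeff {n : ℕ → ℝ} (hn : Tendsto n atTop atTop) (M : ℕ) (p : ℕ × ℕ) :
    Tendsto (fun N => rescaledCoeff N (n N) M p) atTop (nhds (originCoeff M p)) := by
  have hm : Tendsto (fun N => n N + M / 2) atTop atTop := tendsto_atTop_add_const_right _ _ hn
  have hquotient {s t : ℝ} (hst : t ≤ s) :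
      Tendsto (fun N => gammaQuotient s t (n N + M / 2)) atTop (nhds 1) :=
    (tendsto_gammaQuotient hst).comp hm
  have : (0 : ℝ) ≤ p.1 := Nat.cast_nonneg _
  have : (0 : ℝ) ≤ p.2 := Nat.cast_nonneg _
  have : (0 : ℝ) ≤ M := Nat.cast_nonneg _
  have hlim := ((hquotient (s := 1) (t := -(M / 2 + (p.1 + p.2))) (by linarith)).mul
    (hquotient (s := 3 / 2) (t := 1 / 2 - (M / 2 + p.2)) (by linarith))).mul_const
      (originCoeff M p)
  rw [one_mul, one_mul] at hlim
  refine hlim.congr' ?_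
  filter_upwards [eventually_gt_atTop (p.1 + p.2), hm.eventually_gt_atTop 0] with N hN hmN
  rw [rescaledCoeff, if_pos hN, kernelCoeff_div_pow hmN]

end FiniteKernel

section Convergence

lemma tendstoLocallyUniformly_of_tendsto_prod_nhds {α X E : Type*} [TopologicalSpace X]
    [UniformSpace E] {l : Filter α} {F : α → X → E} {f : X → E} (hf : Continuous f)
    (hF : ∀ x, Tendsto (fun y : α × X => F y.1 y.2) (l ×ˢ nhds x) (nhds (f x))) :
    TendstoLocallyUniformly F f l :=
  tendstoLocallyUniformly_iff_forall_tendsto.2 fun x =>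
    (((hf.tendsto x).comp tendsto_snd).prodMk_nhds (hF x)).mono_right (nhds_le_uniformity _)

lemma tendsto_one_add_cpow_of_tendsto_mul {α : Type*} {l : Filter α} {f e : α → ℂ} {t : ℂ}
    (hf : Tendsto f l (nhds 0)) (hef : Tendsto (fun x => e x * f x) l (nhds t)) :
    Tendsto (fun x => (1 + f x) ^ e x) l (nhds (Complex.exp t)) := by
  have hO : (fun x => e x * (Complex.log (1 + f x) - f x)) =O[l] fun x => e x * f x * f x := by
    simpa only [Function.comp_def, mul_assoc, sq] using
      (Asymptotics.isBigO_refl e l).mul (Complex.log_sub_self_isBigO.comp_tendsto hf)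
  have herror := hO.trans_tendsto (by simpa using hef.mul hf)
  have hlog : Tendsto (fun x => e x * Complex.log (1 + f x)) l (nhds t) := by
    simpa only [mul_sub, sub_add_cancel, zero_add] using herror.add hef
  have hne : ∀ᶠ x in l, 1 + f x ≠ 0 := by
    have h := hf.const_add 1
    rw [add_zero] at h
    exact h.eventually_ne one_ne_zero
  refine ((Complex.continuous_exp.tendsto t).comp hlog).congr' ?_
  filter_upwards [hne] with x hx
  rw [Complex.cpow_def_of_ne_zero hx, Function.comp_apply, mul_comm]

lemma tendsto_one_add_sq_mul_one_add_sq_cpow {α : Type*} {l : Filter α} {m : α → ℝ}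
    {z w : α → ℂ} {z₀ w₀ : ℂ} (hm : Tendsto m l atTop) (hz : Tendsto z l (nhds z₀))
    (hw : Tendsto w l (nhds w₀)) :
    Tendsto (fun x => ((1 + (z x / √(m x)) ^ 2) * (1 + (w x / √(m x)) ^ 2)) ^
      ((-(m x - 1 / 2) : ℝ) : ℂ)) l (nhds (Complex.exp (-z₀ ^ 2 - w₀ ^ 2))) := by
  have hinv : Tendsto (fun x => ((m x)⁻¹ : ℂ)) l (nhds 0) := by
    simpa [Function.comp_def] using
      (Complex.continuous_ofReal.tendsto 0).comp (tendsto_inv_atTop_zero.comp hm)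
  have hg : Tendsto (fun x => z x ^ 2 + w x ^ 2 + z x ^ 2 * w x ^ 2 * (m x : ℂ)⁻¹) l
      (nhds (z₀ ^ 2 + w₀ ^ 2)) := by
    simpa using ((hz.pow 2).add (hw.pow 2)).add (((hz.pow 2).mul (hw.pow 2)).mul hinv)
  have hm0 : ∀ᶠ x in l, 0 < m x := hm.eventually_gt_atTop 0
  have hbase : Tendsto (fun x => (m x : ℂ)⁻¹ *
      (z x ^ 2 + w x ^ 2 + z x ^ 2 * w x ^ 2 * (m x : ℂ)⁻¹)) l (nhds 0) := by
    simpa only [zero_mul] using hinv.mul hg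
  have hexponent : Tendsto (fun x => ((-(m x - 1 / 2) : ℝ) : ℂ) * ((m x : ℂ)⁻¹ *
      (z x ^ 2 + w x ^ 2 + z x ^ 2 * w x ^ 2 * (m x : ℂ)⁻¹))) l (nhds (-z₀ ^ 2 - w₀ ^ 2)) := by
    have h := ((hinv.mul_const (1 / 2)).sub_const 1).mul hg
    rw [zero_mul, zero_sub, neg_one_mul, neg_add'] at h
    refine h.congr' ?_
    filter_upwards [hm0] with x hx
    have hx' : (m x : ℂ) ≠ 0 := by exact_mod_cast hx.ne'
    push_cast
    field_simp
    ring
  refine (tendsto_one_add_cpow_of_tendsto_mul hbase hexponent).congr' ?_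
  filter_upwards [hm0] with x hx
  have hsqrt : (√(m x) : ℂ) ^ 2 = m x := by exact_mod_cast Real.sq_sqrt hx.le
  congr 1
  rw [div_pow, div_pow, hsqrt]
  ring

lemma resc_eq_cpow_mul_skewSeries {N : ℕ} {n : ℝ} {M : ℕ} (hN : N ≠ 0) (hn : 0 < n + M / 2)
    (z w : ℂ) :
    resc N n (M / 2) 0 z w =
      ((1 + (z / √(n + M / 2)) ^ 2) * (1 + (w / √(n + M / 2)) ^ 2)) ^
          ((-(n + M / 2 - 1 / 2) : ℝ) : ℂ) *
        skewSeries M (rescaledCoeff N n M) z w := by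
  have hscale : N * dlt N n (M / 2) 0 = n + M / 2 := by
    have hN' : (N : ℝ) ≠ 0 := Nat.cast_ne_zero.2 hN
    rw [dlt, zero_pow two_ne_zero, add_zero, Real.one_rpow, mul_one, mul_div_cancel₀ _ hN']
  rw [resc, sc, hscale, ← rpow_mul_KK_div_sqrt N hn, zero_pow two_ne_zero, add_zero,
    Real.one_rpow]
  simp only [Complex.ofReal_zero, Complex.ofReal_one, zero_add, one_mul]
  ring

theorem kernel_convergence_origin_general {n : ℕ → ℝ} (hn : ∀ᶠ N : ℕ in atTop, (N : ℝ) ≤ n N)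
    {L : ℝ} {M : ℕ} (hM : 2 * L = M) :
    TendstoLocallyUniformly (fun (N : ℕ) (q : ℂ × ℂ) => resc N (n N) L 0 q.1 q.2)
      (fun q => Complex.exp (-q.1 ^ 2 - q.2 ^ 2) * ko M q.1 q.2) atTop := by
  obtain rfl : L = M / 2 := by linarith
  have hn' : Tendsto n atTop atTop := tendsto_atTop_mono' _ hn tendsto_natCast_atTop_atTop
  have hm : Tendsto (fun N => n N + M / 2) atTop atTop := tendsto_atTop_add_const_right _ _ hn'
  have hcontinuous : Continuous fun q : ℂ × ℂ => Complex.exp (-q.1 ^ 2 - q.2 ^ 2) * ko M q.1 q.2 :=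
    (by fun_prop : Continuous fun q : ℂ × ℂ => Complex.exp (-q.1 ^ 2 - q.2 ^ 2)).mul
      (continuous_ko M)
  refine tendstoLocallyUniformly_of_tendsto_prod_nhds hcontinuous fun q => ?_
  have hz : Tendsto (fun y : ℕ × (ℂ × ℂ) => y.2.1) (atTop ×ˢ nhds q) (nhds q.1) :=
    (continuous_fst.tendsto q).comp tendsto_snd
  have hw : Tendsto (fun y : ℕ × (ℂ × ℂ) => y.2.2) (atTop ×ˢ nhds q) (nhds q.2) :=
    (continuous_snd.tendsto q).comp tendsto_snd
  have hweight := tendsto_one_add_sq_mul_one_add_sq_cpow (hm.comp tendsto_fst) hz hw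
  have hseries := tendsto_skewSeries (M := M) hz hw
    (fun p => (tendsto_rescaledCoeff hn' M p).comp tendsto_fst)
    (tendsto_fst.eventually (hn.mono fun N hN p => abs_rescaledCoeff_le hN M p))
  rw [ko_eq_skewSeries]
  refine (hweight.mul hseries).congr' ?_
  filter_upwards [tendsto_fst.eventually (eventually_ne_atTop 0),
    tendsto_fst.eventually (hm.eventually_gt_atTop 0)] with y hN hpos
  exact (resc_eq_cpow_mul_skewSeries hN hpos _ _).symm

end Convergence

/-- equation (2.15), case (c): kernel convergence at the singular
origin (`2L = M` a positive integer, zooming point `p = 0`). -/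
theorem kernel_convergence_origin (b L : ℝ) (hb : 0 < b) (M : ℕ) (hM : 2*L = (M : ℝ))
    (hM1 : 1 ≤ M) (K : Set (ℂ × ℂ)) (hK : IsCompact K) :
    TendstoUniformlyOn
      (fun (N : ℕ) (q : ℂ × ℂ) => resc N ((b+1)*N) L 0 q.1 q.2)
      (fun q => Complex.exp (-q.1^2-q.2^2) * ko M q.1 q.2)
      (atTop ⊓ 𝓟 (Ssing b)) K := by
  have hn : ∀ᶠ N : ℕ in atTop, (N : ℝ) ≤ (b + 1) * N :=
    Eventually.of_forall fun N => le_mul_of_one_le_left N.cast_nonneg (by linarith)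
  have h := tendstoLocallyUniformly_iff_forall_isCompact.1
    (kernel_convergence_origin_general hn hM) K hK
  exact fun u hu => (h u hu).filter_mono inf_le_left

end SI
end
end
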